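/- arXiv:2412.03444 — 4 statements merged into one kernel-verified Lean document; each statement's English description precedes it below -/
import Mathlib

section
/- Let ρ and σ be positive definite d×d density matrices, and let (α,z) satisfy either α ∈ (0,1)∪(1,∞) with z ∈ (0,1), or 1 < α ≤ 2 with α/2 ≤ z ≤ α, or 2 ≤ α < ∞ with α−1 ≤ z ≤ α. Then the minimum of the sandwiched α-z-Rényi relative entropy S_{α,z}(ρ‖UσU*) over all d×d unitary matrices U equals S_α^C(λ↓(ρ)‖λ↓(σ)). -/
open Matrix
open scoped ComplexOrder

/-- Real power of a (Hermitian) matrix via functional calculus on eigenvalues,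
with `(0:ℝ) ^ t = 0` for `t ≠ 0`. Returns `0` on non-Hermitian input. -/
noncomputable def mpow {d : ℕ} (A : Matrix (Fin d) (Fin d) ℂ) (t : ℝ) :
    Matrix (Fin d) (Fin d) ℂ :=
  if hA : A.IsHermitian then
    (hA.eigenvectorUnitary : Matrix (Fin d) (Fin d) ℂ) *
      Matrix.diagonal (fun i => ((hA.eigenvalues i ^ t : ℝ) : ℂ)) *
      (star (hA.eigenvectorUnitary : Matrix (Fin d) (Fin d) ℂ))
  else 0

/-- The quantum α-z-fidelity
`F_{α,z}(ρ,σ) = (Tr[(σ^{(1-α)/(2z)} ρ^{α/z} σ^{(1-α)/(2z)})^z])^{1/α}`. -/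
noncomputable def Faz {d : ℕ} (ρ σ : Matrix (Fin d) (Fin d) ℂ) (α z : ℝ) : ℝ :=
  ((mpow (mpow σ ((1 - α) / (2 * z)) * mpow ρ (α / z) * mpow σ ((1 - α) / (2 * z))) z).trace.re)
    ^ (1 / α)

/-- The classical α-fidelity `F_α^C(p,q) = (Σ_i p_i^α q_i^{1-α})^{1/α}`. -/
noncomputable def FazC {d : ℕ} (p q : Fin d → ℝ) (α : ℝ) : ℝ :=
  (∑ i, p i ^ α * q i ^ (1 - α)) ^ (1 / α)

/-- The vector `p` rearranged in increasing order. -/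
noncomputable def sortUp {d : ℕ} (p : Fin d → ℝ) : Fin d → ℝ :=
  p ∘ Tuple.sort p

/-- The vector `p` rearranged in decreasing order. -/
noncomputable def sortDown {d : ℕ} (p : Fin d → ℝ) : Fin d → ℝ :=
  fun i => sortUp p i.rev

/-- `λ↑(A)`: the eigenvalues of a Hermitian matrix in increasing order. -/
noncomputable def eigUp {d : ℕ} {A : Matrix (Fin d) (Fin d) ℂ} (hA : A.IsHermitian) :
    Fin d → ℝ := sortUp hA.eigenvalues

/-- `λ↓(A)`: the eigenvalues of a Hermitian matrix in decreasing order. -/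
noncomputable def eigDown {d : ℕ} {A : Matrix (Fin d) (Fin d) ℂ} (hA : A.IsHermitian) :
    Fin d → ℝ := sortDown hA.eigenvalues

/-- The sandwiched α-z-Rényi relative entropy `S_{α,z}(ρ‖σ) = (α/(α−1)) log F_{α,z}(ρ,σ)`. -/
noncomputable def Saz {d : ℕ} (ρ σ : Matrix (Fin d) (Fin d) ℂ) (α z : ℝ) : ℝ :=
  (α / (α - 1)) * Real.log (Faz ρ σ α z)

/-- The classical α-Rényi relative entropy `S_α^C(p‖q) = (α/(α−1)) log F_α^C(p,q)`. -/
noncomputable def SazC {d : ℕ} (p q : Fin d → ℝ) (α : ℝ) : ℝ :=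
  (α / (α - 1)) * Real.log (FazC p q α)

/-- `A` is unitarily diagonalized with real diagonal `v`. -/
def Dg {d : ℕ} (A : Matrix (Fin d) (Fin d) ℂ) (v : Fin d → ℝ) : Prop :=
  ∃ U ∈ Matrix.unitaryGroup (Fin d) ℂ,
    A = U * Matrix.diagonal (fun i => ((v i : ℝ) : ℂ)) * star U

section helpers
variable {d : ℕ}

lemma un1 {U : Matrix (Fin d) (Fin d) ℂ} (hU : U ∈ Matrix.unitaryGroup (Fin d) ℂ) :
    star U * U = 1 := Matrix.mem_unitaryGroup_iff'.1 hU

lemma un2 {U : Matrix (Fin d) (Fin d) ℂ} (hU : U ∈ Matrix.unitaryGroup (Fin d) ℂ) :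
    U * star U = 1 := Matrix.mem_unitaryGroup_iff.1 hU

lemma conj_herm (U : Matrix (Fin d) (Fin d) ℂ) (v : Fin d → ℝ) :
    (U * Matrix.diagonal (fun i => ((v i : ℝ) : ℂ)) * star U).IsHermitian := by
  have h : (Matrix.diagonal (fun i => ((v i : ℝ) : ℂ))).IsHermitian := by
    apply Matrix.isHermitian_diagonal_of_self_adjoint
    ext i
    simp
  exact Matrix.isHermitian_mul_mul_conjTranspose U h

lemma Dg.herm {A : Matrix (Fin d) (Fin d) ℂ} {v : Fin d → ℝ} (h : Dg A v) : A.IsHermitian := by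
  obtain ⟨U, hU, rfl⟩ := h
  exact conj_herm U v

lemma cj_mul {U : Matrix (Fin d) (Fin d) ℂ} (hU : U ∈ Matrix.unitaryGroup (Fin d) ℂ)
    (v w : Fin d → ℝ) :
    (U * Matrix.diagonal (fun i => ((v i : ℝ) : ℂ)) * star U) *
      (U * Matrix.diagonal (fun i => ((w i : ℝ) : ℂ)) * star U) =
    U * Matrix.diagonal (fun i => ((v i * w i : ℝ) : ℂ)) * star U := by
  calc _ = U * Matrix.diagonal (fun i => ((v i : ℝ) : ℂ)) * (star U * U) *
        Matrix.diagonal (fun i => ((w i : ℝ) : ℂ)) * star U := by simp only [Matrix.mul_assoc]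
    _ = _ := by
        rw [un1 hU, Matrix.mul_one, Matrix.mul_assoc U, Matrix.diagonal_mul_diagonal]
        simp

lemma conj_trace {U : Matrix (Fin d) (Fin d) ℂ} (hU : U ∈ Matrix.unitaryGroup (Fin d) ℂ)
    (v : Fin d → ℝ) :
    (U * Matrix.diagonal (fun i => ((v i : ℝ) : ℂ)) * star U).trace = ((∑ i, v i : ℝ) : ℂ) := by
  rw [Matrix.trace_mul_comm, ← Matrix.mul_assoc, un1 hU, Matrix.one_mul, Matrix.trace_diagonal]
  simp

lemma Dg.det {A : Matrix (Fin d) (Fin d) ℂ} {v : Fin d → ℝ} (h : Dg A v) :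
    A.det = ((∏ i, v i : ℝ) : ℂ) := by
  obtain ⟨U, hU, rfl⟩ := h
  rw [Matrix.det_mul_comm, ← Matrix.mul_assoc, un1 hU, Matrix.one_mul, Matrix.det_diagonal]
  simp

lemma Dg.smul {A : Matrix (Fin d) (Fin d) ℂ} {v : Fin d → ℝ} (h : Dg A v) (t : ℝ) :
    Dg ((t : ℂ) • A) (fun i => t * v i) := by
  obtain ⟨U, hU, rfl⟩ := h
  refine ⟨U, hU, ?_⟩
  have : Matrix.diagonal (fun i => ((t * v i : ℝ) : ℂ)) =
      (t : ℂ) • Matrix.diagonal (fun i => ((v i : ℝ) : ℂ)) := by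
    rw [← Matrix.diagonal_smul]
    congr 1
    ext i
    simp
  rw [this]
  simp

/-- well-definedness of the functional calculus -/
lemma conj_fun {U V : Matrix (Fin d) (Fin d) ℂ} (hU : U ∈ Matrix.unitaryGroup (Fin d) ℂ)
    (hV : V ∈ Matrix.unitaryGroup (Fin d) ℂ) (v w : Fin d → ℝ)
    (h : U * Matrix.diagonal (fun i => ((v i : ℝ) : ℂ)) * star U =
      V * Matrix.diagonal (fun i => ((w i : ℝ) : ℂ)) * star V) (f : ℝ → ℝ) :
    U * Matrix.diagonal (fun i => ((f (v i) : ℝ) : ℂ)) * star U =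
      V * Matrix.diagonal (fun i => ((f (w i) : ℝ) : ℂ)) * star V := by
  have h1 : (star V * U) * Matrix.diagonal (fun i => ((v i : ℝ) : ℂ)) =
      Matrix.diagonal (fun i => ((w i : ℝ) : ℂ)) * (star V * U) := by
    calc _ = star V * (U * Matrix.diagonal (fun i => ((v i : ℝ) : ℂ)) * star U) * U := by
          simp only [Matrix.mul_assoc, un1 hU, Matrix.mul_one]
      _ = (star V * V) * Matrix.diagonal (fun i => ((w i : ℝ) : ℂ)) * (star V * U) := by
          rw [h]; simp only [Matrix.mul_assoc]
      _ = _ := by rw [un1 hV, Matrix.one_mul]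
  have h2 : (star V * U) * Matrix.diagonal (fun i => ((f (v i) : ℝ) : ℂ)) =
      Matrix.diagonal (fun i => ((f (w i) : ℝ) : ℂ)) * (star V * U) := by
    ext i j
    have := congrFun (congrFun h1 i) j
    rw [Matrix.mul_diagonal, Matrix.diagonal_mul] at this ⊢
    by_cases hz : (star V * U) i j = 0
    · simp [hz]
    · have h3 : (v j : ℂ) = w i := by
        rw [mul_comm] at this
        exact mul_right_cancel₀ hz this
      have h4 : v j = w i := by exact_mod_cast h3
      rw [h4, mul_comm]
  calc _ = (V * star V) * U * Matrix.diagonal (fun i => ((f (v i) : ℝ) : ℂ)) * star U := by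
        rw [un2 hV, Matrix.one_mul]
    _ = V * ((star V * U) * Matrix.diagonal (fun i => ((f (v i) : ℝ) : ℂ))) * star U := by
        simp only [Matrix.mul_assoc]
    _ = V * Matrix.diagonal (fun i => ((f (w i) : ℝ) : ℂ)) * star V * (U * star U) := by
        rw [h2]; simp only [Matrix.mul_assoc]
    _ = _ := by rw [un2 hU, Matrix.mul_one]

lemma spec' {A : Matrix (Fin d) (Fin d) ℂ} (hA : A.IsHermitian) :
    A = (hA.eigenvectorUnitary : Matrix (Fin d) (Fin d) ℂ) *
      Matrix.diagonal (fun i => ((hA.eigenvalues i : ℝ) : ℂ)) *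
      star (hA.eigenvectorUnitary : Matrix (Fin d) (Fin d) ℂ) := by
  conv_lhs => rw [hA.spectral_theorem, Unitary.conjStarAlgAut_apply]
  rfl

lemma mpow_conj {U : Matrix (Fin d) (Fin d) ℂ} (hU : U ∈ Matrix.unitaryGroup (Fin d) ℂ)
    (v : Fin d → ℝ) (t : ℝ) :
    mpow (U * Matrix.diagonal (fun i => ((v i : ℝ) : ℂ)) * star U) t =
      U * Matrix.diagonal (fun i => ((v i ^ t : ℝ) : ℂ)) * star U := by
  have hA := conj_herm U v
  rw [mpow, dif_pos hA]
  exact conj_fun hA.eigenvectorUnitary.2 hU _ _ (spec' hA).symm (fun x => x ^ t)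

lemma antitone_eigDown {A : Matrix (Fin d) (Fin d) ℂ} (hA : A.IsHermitian) :
    Antitone (eigDown hA) := by
  intro i j hij
  exact Tuple.monotone_sort hA.eigenvalues (Fin.rev_le_rev.2 hij)

lemma dg_eigDown {A : Matrix (Fin d) (Fin d) ℂ} (hA : A.IsHermitian) :
    Dg A (eigDown hA) := by
  set W : Matrix (Fin d) (Fin d) ℂ := (hA.eigenvectorUnitary : Matrix (Fin d) (Fin d) ℂ) with hW
  have hWu : W ∈ Matrix.unitaryGroup (Fin d) ℂ := hA.eigenvectorUnitary.2
  let π : Equiv.Perm (Fin d) := Fin.revPerm.trans (Tuple.sort hA.eigenvalues)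
  have hd : Matrix.diagonal (fun i => ((eigDown hA i : ℝ) : ℂ)) =
      (Matrix.diagonal (fun i => ((hA.eigenvalues i : ℝ) : ℂ))).submatrix π π := by
    rw [Matrix.submatrix_diagonal _ _ π.injective]
    rfl
  have hs : star (W.submatrix id π) = (star W).submatrix π id := rfl
  refine ⟨W.submatrix id π, ?_, ?_⟩
  · rw [Matrix.mem_unitaryGroup_iff, hs, Matrix.submatrix_mul_equiv, un2 hWu]
    simp
  · rw [hd, hs, Matrix.submatrix_mul_equiv, Matrix.submatrix_mul_equiv, hW, ← spec' hA]
    simp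

/-- quadratic form of a diagonalized matrix -/
lemma conj_quad (U : Matrix (Fin d) (Fin d) ℂ) (v : Fin d → ℝ) (x : Fin d → ℂ) :
    star x ⬝ᵥ ((U * Matrix.diagonal (fun i => ((v i : ℝ) : ℂ)) * star U) *ᵥ x) =
      ((∑ i, v i * Complex.normSq ((star U *ᵥ x) i) : ℝ) : ℂ) := by
  rw [← Matrix.mulVec_mulVec, ← Matrix.mulVec_mulVec, Matrix.dotProduct_mulVec]
  have : star x ᵥ* U = star (star U *ᵥ x) := by
    rw [Matrix.star_mulVec, Matrix.star_eq_conjTranspose, Matrix.conjTranspose_conjTranspose]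
  rw [this]
  simp only [dotProduct, Matrix.mulVec_diagonal, Pi.star_apply]
  push_cast
  refine Finset.sum_congr rfl fun i _ => ?_
  rw [Complex.normSq_eq_conj_mul_self]
  simp only [RCLike.star_def]
  ring

lemma unit_quad {U : Matrix (Fin d) (Fin d) ℂ} (hU : U ∈ Matrix.unitaryGroup (Fin d) ℂ)
    (x : Fin d → ℂ) :
    ∑ i, Complex.normSq ((star U *ᵥ x) i) = ∑ i, Complex.normSq (x i) := by
  have h1 := conj_quad U (fun _ => 1) x
  have h2 := conj_quad 1 (fun _ => 1) x
  simp only [Complex.ofReal_one, Matrix.diagonal_one, Matrix.mul_one, un2 hU, one_mul, star_one,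
    Matrix.one_mulVec] at h1 h2
  rw [h1] at h2
  exact_mod_cast h2

/-- Weyl monotonicity. -/
lemma weyl {A B : Matrix (Fin d) (Fin d) ℂ} {a b : Fin d → ℝ} (ha : Antitone a)
    (hb : Antitone b) (hA : Dg A a) (hB : Dg B b) (hAB : (B - A).PosSemidef) (i : Fin d) :
    a i ≤ b i := by
  obtain ⟨U, hU, rfl⟩ := hA
  obtain ⟨V, hV, rfl⟩ := hB
  by_contra! hlt
  let K : Matrix (Fin d) (Fin d) ℂ := fun j =>
    if j < i then (star V) j else if j = i then 0 else (star U) j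
  have hK : K.det = 0 := Matrix.det_eq_zero_of_row_eq_zero i (fun j => by simp [K])
  obtain ⟨x, hx0, hx⟩ := Matrix.exists_mulVec_eq_zero_iff.2 hK
  have hV0 : ∀ j, j < i → (star V *ᵥ x) j = 0 := by
    intro j hj
    have := congrFun hx j
    simpa [K, hj, Matrix.mulVec] using this
  have hU0 : ∀ j, i < j → (star U *ᵥ x) j = 0 := by
    intro j hj
    have := congrFun hx j
    simpa [K, hj.ne', hj.not_gt, Matrix.mulVec] using this
  have hq := hAB.dotProduct_mulVec_nonneg x
  rw [Matrix.sub_mulVec, dotProduct_sub, conj_quad, conj_quad, ← Complex.ofReal_sub] at hq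
  have hq' : 0 ≤ ∑ j, b j * Complex.normSq ((star V *ᵥ x) j) -
      ∑ j, a j * Complex.normSq ((star U *ᵥ x) j) := by exact_mod_cast hq
  have h1 : ∑ j, b j * Complex.normSq ((star V *ᵥ x) j) ≤ b i * ∑ j, Complex.normSq (x j) := by
    rw [← unit_quad hV, Finset.mul_sum]
    refine Finset.sum_le_sum fun j _ => ?_
    by_cases hj : j < i
    · simp [hV0 j hj]
    · exact mul_le_mul_of_nonneg_right (hb (not_lt.1 hj)) (Complex.normSq_nonneg _)
  have h2 : a i * ∑ j, Complex.normSq (x j) ≤ ∑ j, a j * Complex.normSq ((star U *ᵥ x) j) := by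
    rw [← unit_quad hU, Finset.mul_sum]
    refine Finset.sum_le_sum fun j _ => ?_
    by_cases hj : i < j
    · simp [hU0 j hj]
    · exact mul_le_mul_of_nonneg_right (ha (not_lt.1 hj)) (Complex.normSq_nonneg _)
  have h3 : 0 < ∑ j, Complex.normSq (x j) := by
    obtain ⟨j, hj⟩ := Function.ne_iff.1 hx0
    exact Finset.sum_pos' (fun j _ => Complex.normSq_nonneg _)
      ⟨j, Finset.mem_univ _, Complex.normSq_pos.2 hj⟩
  nlinarith

lemma conj_psd (U : Matrix (Fin d) (Fin d) ℂ) {v : Fin d → ℝ} (hv : ∀ i, 0 ≤ v i) :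
    (U * Matrix.diagonal (fun i => ((v i : ℝ) : ℂ)) * star U).PosSemidef := by
  have : (Matrix.diagonal (fun i => ((v i : ℝ) : ℂ))).PosSemidef := by
    rw [Matrix.posSemidef_diagonal_iff]
    intro i
    exact_mod_cast hv i
  exact this.mul_mul_conjTranspose_same U

lemma Dg.pos {A : Matrix (Fin d) (Fin d) ℂ} {v : Fin d → ℝ} (h : Dg A v) (hA : A.PosDef)
    (i : Fin d) : 0 < v i := by
  obtain ⟨U, hU, rfl⟩ := h
  have hx : U *ᵥ (Pi.single i 1) ≠ 0 := by
    intro h0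
    have : star U *ᵥ (U *ᵥ (Pi.single i (1 : ℂ))) = 0 := by rw [h0]; simp
    rw [Matrix.mulVec_mulVec, un1 hU, Matrix.one_mulVec] at this
    have := congrFun this i
    simp at this
  have := hA.dotProduct_mulVec_pos hx
  rw [conj_quad, Matrix.mulVec_mulVec, un1 hU, Matrix.one_mulVec] at this
  have h2 : 0 < ∑ j, v j * Complex.normSq ((Pi.single i (1 : ℂ) : Fin d → ℂ) j) := by
    exact_mod_cast this
  rw [Finset.sum_eq_single i] at h2
  · simpa using h2
  · intro j _ hj
    simp [hj]
  · simp

lemma conj_pd {U : Matrix (Fin d) (Fin d) ℂ} (hU : U ∈ Matrix.unitaryGroup (Fin d) ℂ)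
    {v : Fin d → ℝ} (hv : ∀ i, 0 < v i) :
    (U * Matrix.diagonal (fun i => ((v i : ℝ) : ℂ)) * star U).PosDef := by
  refine Matrix.PosDef.of_dotProduct_mulVec_pos (conj_herm U v) fun x hx => ?_
  rw [conj_quad]
  have hy : star U *ᵥ x ≠ 0 := by
    intro h0
    apply hx
    have : U *ᵥ (star U *ᵥ x) = 0 := by rw [h0]; simp
    rwa [Matrix.mulVec_mulVec, un2 hU, Matrix.one_mulVec] at this
  obtain ⟨j, hj⟩ := Function.ne_iff.1 hy
  have : 0 < ∑ i, v i * Complex.normSq ((star U *ᵥ x) i) :=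
    Finset.sum_pos' (fun j _ => mul_nonneg (hv j).le (Complex.normSq_nonneg _))
      ⟨j, Finset.mem_univ _, mul_pos (hv j) (Complex.normSq_pos.2 hj)⟩
  exact_mod_cast this

/-- the first `k` indices -/
def pre (d k : ℕ) : Finset (Fin d) := Finset.univ.filter (fun i : Fin d => (i : ℕ) < k)

lemma card_pre {k : ℕ} (hk : k ≤ d) : (pre d k).card = k := by
  rw [pre, Fin.card_filter_val_lt, min_eq_right hk]

/-- Multiplicative Lidskii (Li–Mathias argument). -/
lemma lidskii {R N : Matrix (Fin d) (Fin d) ℂ} {p m n : Fin d → ℝ} (hR : R.IsHermitian)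
    (hp : Antitone p) (hm : Antitone m) (hn : Antitone n)
    (hp0 : ∀ i, 0 < p i) (hm0 : ∀ i, 0 < m i) (hn0 : ∀ i, 0 < n i)
    (hP : Dg (R * N * R) p) (hM : Dg (R * R) m) (hN : Dg N n) (I : Finset (Fin d)) :
    ∏ i ∈ I, p i ≤ (∏ i ∈ I, m i) * ∏ i ∈ pre d I.card, n i := by
  rcases I.eq_empty_or_nonempty with rfl | hI
  · simp [pre]
  have hk0 : 0 < I.card := hI.card_pos
  have hkd : I.card ≤ d := by simpa using I.card_le_univ
  set k := I.card with hk
  let l : Fin d := ⟨k - 1, by omega⟩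
  set τ := n l with hτ
  have hτ0 : 0 < τ := hn0 l
  obtain ⟨V, hV, rfl⟩ := hN
  set N := V * Matrix.diagonal (fun i => ((n i : ℝ) : ℂ)) * star V with hNdef
  set N' := V * Matrix.diagonal (fun i => ((max (n i) τ : ℝ) : ℂ)) * star V with hN'def
  have hN' : Dg N' (fun i => max (n i) τ) := ⟨V, hV, rfl⟩
  have hRR : ∀ X : Matrix (Fin d) (Fin d) ℂ, X.PosSemidef → (R * X * R).PosSemidef := by
    intro X hX
    have := hX.mul_mul_conjTranspose_same R
    rwa [hR.eq] at this
  have hQh : (R * N' * R).IsHermitian := (hRR N' (conj_psd V fun i => (hn0 i).le.trans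
    (le_max_left _ _))).1
  set q := eigDown hQh with hq
  have hQ : Dg (R * N' * R) q := dg_eigDown hQh
  have hqa : Antitone q := antitone_eigDown hQh
  have h1 : ∀ i, p i ≤ q i := by
    refine weyl hp hqa hP hQ ?_
    have : R * N' * R - R * N * R = R * (N' - N) * R := by
      rw [Matrix.mul_sub, Matrix.sub_mul]
    rw [this]
    apply hRR
    have : N' - N = V * Matrix.diagonal (fun i => ((max (n i) τ - n i : ℝ) : ℂ)) * star V := by
      rw [hN'def, hNdef, ← Matrix.sub_mul, ← Matrix.mul_sub, Matrix.diagonal_sub]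
      simp
    rw [this]
    exact conj_psd V fun i => sub_nonneg.2 (le_max_left _ _)
  have h2 : ∀ i, τ * m i ≤ q i := by
    refine weyl (fun i j hij => mul_le_mul_of_nonneg_left (hm hij) hτ0.le) hqa (hM.smul τ) hQ ?_
    have : R * N' * R - (τ : ℂ) • (R * R) = R * (N' - (τ : ℂ) • 1) * R := by
      rw [Matrix.mul_sub, Matrix.sub_mul]
      simp
    rw [this]
    apply hRR
    have : N' - (τ : ℂ) • 1 =
        V * Matrix.diagonal (fun i => ((max (n i) τ - τ : ℝ) : ℂ)) * star V := by
      have h3 : ((τ : ℂ) • 1 : Matrix (Fin d) (Fin d) ℂ) =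
          V * Matrix.diagonal (fun _ => ((τ : ℝ) : ℂ)) * star V := by
        have : Matrix.diagonal (fun _ : Fin d => ((τ : ℝ) : ℂ)) = (τ : ℂ) • 1 := by
          rw [Matrix.smul_one_eq_diagonal]
        rw [this]
        simp [un2 hV]
      rw [h3, hN'def, ← Matrix.sub_mul, ← Matrix.mul_sub, Matrix.diagonal_sub]
      simp
    rw [this]
    exact conj_psd V fun i => sub_nonneg.2 (le_max_right _ _)
  have hdet : ∏ i, q i = (∏ i, m i) * ∏ i, max (n i) τ := by
    have h3 := hQ.det
    have h4 := hM.det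
    have h5 := hN'.det
    rw [Matrix.det_mul, Matrix.det_mul] at h3
    rw [Matrix.det_mul] at h4
    have h6 : ((∏ i, q i : ℝ) : ℂ) = ((∏ i, m i : ℝ) : ℂ) * ((∏ i, max (n i) τ : ℝ) : ℂ) := by
      rw [← h3, ← h4, ← h5]; ring
    exact_mod_cast h6
  have hmax : ∏ i, max (n i) τ = (∏ i ∈ pre d k, n i) * τ ^ (d - k) := by
    rw [← Finset.prod_mul_prod_compl (pre d k)]
    congr 1
    · refine Finset.prod_congr rfl fun i hi => max_eq_left (hn ?_)
      simp only [pre, Finset.mem_filter, Finset.mem_univ, true_and] at hi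
      rw [Fin.le_def]
      change (i : ℕ) ≤ k - 1
      omega
    · rw [Finset.prod_congr rfl (g := fun _ => τ), Finset.prod_const, Finset.card_compl,
        card_pre hkd, Fintype.card_fin]
      intro i hi
      refine max_eq_right (hn ?_)
      simp only [pre, Finset.mem_compl, Finset.mem_filter, Finset.mem_univ, true_and] at hi
      rw [Fin.le_def]
      change k - 1 ≤ (i : ℕ)
      omega
  have hq0 : ∀ i, 0 < q i := fun i => (hp0 i).trans_le (h1 i)
  have h7 : ∏ i ∈ I, p i ≤ ∏ i ∈ I, q i :=
    Finset.prod_le_prod (fun i _ => (hp0 i).le) fun i _ => h1 i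
  refine h7.trans ?_
  have h8 : τ ^ (d - k) * ∏ i ∈ Iᶜ, m i ≤ ∏ i ∈ Iᶜ, q i := by
    have : τ ^ (d - k) * ∏ i ∈ Iᶜ, m i = ∏ i ∈ Iᶜ, τ * m i := by
      rw [Finset.prod_mul_distrib, Finset.prod_const, Finset.card_compl, Fintype.card_fin]
    rw [this]
    exact Finset.prod_le_prod (fun i _ => (mul_pos hτ0 (hm0 i)).le) fun i _ => h2 i
  have h9 : 0 < τ ^ (d - k) * ∏ i ∈ Iᶜ, m i :=
    mul_pos (pow_pos hτ0 _) (Finset.prod_pos fun i _ => hm0 i)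
  refine le_of_mul_le_mul_right ?_ h9
  calc (∏ i ∈ I, q i) * (τ ^ (d - k) * ∏ i ∈ Iᶜ, m i)
      ≤ (∏ i ∈ I, q i) * ∏ i ∈ Iᶜ, q i :=
        mul_le_mul_of_nonneg_left h8 (Finset.prod_pos fun i _ => hq0 i).le
    _ = ((∏ i ∈ I, m i) * ∏ i ∈ Iᶜ, m i) * ((∏ i ∈ pre d k, n i) * τ ^ (d - k)) := by
        rw [Finset.prod_mul_prod_compl, Finset.prod_mul_prod_compl, hdet, hmax]
    _ = _ := by ring

/-- Abel summation. -/
lemma abel_aux (w u : ℕ → ℝ) (N : ℕ) (hw0 : ∀ i < N, 0 ≤ w i)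
    (hw : ∀ i j, i ≤ j → j < N → w j ≤ w i)
    (hu : ∀ k ≤ N, 0 ≤ ∑ i ∈ Finset.range k, u i) :
    0 ≤ ∑ i ∈ Finset.range N, w i * u i := by
  have key : ∀ k < N, w k * ∑ i ∈ Finset.range (k + 1), u i ≤
      ∑ i ∈ Finset.range (k + 1), w i * u i := by
    intro k
    induction k with
    | zero => intro _; simp
    | succ k ih =>
      intro hk
      have h1 := ih (by omega)
      rw [Finset.sum_range_succ, Finset.sum_range_succ _ (k + 1), mul_add]
      have h2 := mul_le_mul_of_nonneg_right (hw k (k + 1) (by omega) hk) (hu (k + 1) (by omega))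
      linarith
  rcases N with _ | N
  · simp
  · exact (mul_nonneg (hw0 N (by omega)) (hu (N + 1) le_rfl)).trans (key N (by omega))

/-- weak log-majorization, sorted. -/
lemma maj_sorted {x y : Fin d → ℝ} (hx0 : ∀ i, 0 < x i) (hy0 : ∀ i, 0 < y i)
    (hx : Antitone x)
    (h : ∀ k ≤ d, ∏ i ∈ pre d k, x i ≤ ∏ i ∈ pre d k, y i) {z : ℝ} (hz : 0 < z) :
    ∑ i, x i ^ z ≤ ∑ i, y i ^ z := by
  have hconv : ∀ i, x i ^ z * (z * (Real.log (y i) - Real.log (x i))) ≤ y i ^ z - x i ^ z := by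
    intro i
    have h1 : y i ^ z = x i ^ z * Real.exp (z * (Real.log (y i) - Real.log (x i))) := by
      rw [Real.rpow_def_of_pos (hy0 i), Real.rpow_def_of_pos (hx0 i), ← Real.exp_add]
      congr 1; ring
    have h2 := Real.add_one_le_exp (z * (Real.log (y i) - Real.log (x i)))
    have h3 := Real.rpow_pos_of_pos (hx0 i) z
    rw [h1]
    nlinarith
  let w : ℕ → ℝ := fun i => if hi : i < d then x ⟨i, hi⟩ ^ z else 0
  let u : ℕ → ℝ := fun i => if hi : i < d then
    z * (Real.log (y ⟨i, hi⟩) - Real.log (x ⟨i, hi⟩)) else 0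
  have hab := abel_aux w u d ?_ ?_ ?_
  · rw [← Fin.sum_univ_eq_sum_range (fun i => w i * u i)] at hab
    simp only [w, u, Fin.is_lt, dif_pos, Fin.eta] at hab
    have := Finset.sum_le_sum (fun i (_ : i ∈ Finset.univ) => hconv i)
    rw [Finset.sum_sub_distrib] at this
    linarith
  · intro i hi
    simp only [w, hi, dif_pos]
    exact (Real.rpow_pos_of_pos (hx0 _) z).le
  · intro i j hij hj
    simp only [w, hj, hij.trans_lt hj, dif_pos]
    exact Real.rpow_le_rpow (hx0 _).le (hx (by simpa [Fin.le_def] using hij)) hz.le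
  · intro k hk
    have e1 : ∑ i ∈ Finset.range k, u i =
        ∑ i ∈ pre d k, z * (Real.log (y i) - Real.log (x i)) := by
      have e2 : Finset.range k = (pre d k).map Fin.valEmbedding := by
        ext i
        simp only [pre, Finset.mem_range, Finset.mem_map, Finset.mem_filter, Finset.mem_univ,
          true_and, Fin.valEmbedding_apply]
        constructor
        · intro hi; exact ⟨⟨i, by omega⟩, hi, rfl⟩
        · rintro ⟨j, hj, rfl⟩; exact hj
      rw [e2, Finset.sum_map]
      refine Finset.sum_congr rfl fun i _ => ?_
      simp [u]
    rw [e1, ← Finset.mul_sum, Finset.sum_sub_distrib,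
      ← Real.log_prod (fun i _ => (hy0 i).ne'), ← Real.log_prod (fun i _ => (hx0 i).ne')]
    exact mul_nonneg hz.le (sub_nonneg.2 (Real.log_le_log (Finset.prod_pos fun i _ => hx0 i)
      (h k hk)))

lemma maj_all {x y : Fin d → ℝ} (hx0 : ∀ i, 0 < x i) (hy0 : ∀ i, 0 < y i)
    (h : ∀ I : Finset (Fin d), ∏ i ∈ I, x i ≤ ∏ i ∈ pre d I.card, y i) {z : ℝ} (hz : 0 < z) :
    ∑ i, x i ^ z ≤ ∑ i, y i ^ z := by
  let π : Equiv.Perm (Fin d) := Fin.revPerm.trans (Tuple.sort x)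
  have ha : Antitone (x ∘ π) := fun i j hij => Tuple.monotone_sort x (Fin.rev_le_rev.2 hij)
  have := maj_sorted (x := x ∘ π) (y := y) (fun i => hx0 _) hy0 ha ?_ hz
  · rwa [← Equiv.sum_comp π (fun i => x i ^ z)]
  · intro k hk
    have := h ((pre d k).map π.toEmbedding)
    rw [Finset.card_map, card_pre hk, Finset.prod_map] at this
    exact this

/-- core two-sided trace inequality -/
lemma core {U V : Matrix (Fin d) (Fin d) ℂ} (hU : U ∈ Matrix.unitaryGroup (Fin d) ℂ)
    (hV : V ∈ Matrix.unitaryGroup (Fin d) ℂ) {a s : Fin d → ℝ} (ha : Antitone a)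
    (hs : Antitone s) (ha0 : ∀ i, 0 < a i) (hs0 : ∀ i, 0 < s i) {α z : ℝ} (hα : 0 < α)
    (hz : 0 < z) :
    ∃ c : Fin d → ℝ, (∀ i, 0 < c i) ∧
      (mpow (mpow (V * Matrix.diagonal (fun i => ((s i : ℝ) : ℂ)) * star V) ((1 - α) / (2 * z)) *
        mpow (U * Matrix.diagonal (fun i => ((a i : ℝ) : ℂ)) * star U) (α / z) *
        mpow (V * Matrix.diagonal (fun i => ((s i : ℝ) : ℂ)) * star V)
          ((1 - α) / (2 * z))) z).trace.re = ∑ i, c i ^ z ∧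
      (α < 1 → ∑ i, c i ^ z ≤ ∑ i, a i ^ α * s i ^ (1 - α)) ∧
      (1 < α → ∑ i, a i ^ α * s i ^ (1 - α) ≤ ∑ i, c i ^ z) := by
  rw [mpow_conj hU, mpow_conj hV]
  set A := U * Matrix.diagonal (fun i => ((a i ^ (α / z) : ℝ) : ℂ)) * star U with hA
  set R := V * Matrix.diagonal (fun i => ((s i ^ ((1 - α) / (2 * z)) : ℝ) : ℂ)) * star V with hR
  set T := V * Matrix.diagonal (fun i => ((s i ^ (-((1 - α) / (2 * z))) : ℝ) : ℂ)) * star V with hT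
  have hp0 : ∀ (t : ℝ) i, 0 < s i ^ t := fun t i => Real.rpow_pos_of_pos (hs0 i) t
  have ha0' : ∀ (t : ℝ) i, 0 < a i ^ t := fun t i => Real.rpow_pos_of_pos (ha0 i) t
  have hRh : R.IsHermitian := conj_herm V _
  have hTh : T.IsHermitian := conj_herm V _
  have hone : ∀ i, s i ^ ((1 - α) / (2 * z)) * s i ^ (-((1 - α) / (2 * z))) = 1 := by
    intro i
    rw [← Real.rpow_add (hs0 i), add_neg_cancel, Real.rpow_zero]
  have hRT : R * T = 1 := by
    rw [hR, hT, cj_mul hV]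
    simp only [hone, Complex.ofReal_one, Matrix.diagonal_one, Matrix.mul_one]
    exact un2 hV
  have hTR : T * R = 1 := mul_eq_one_comm.1 hRT
  have hAd : Dg A (fun i => a i ^ (α / z)) := ⟨U, hU, rfl⟩
  have hAa : Antitone (fun i => a i ^ (α / z)) := fun i j hij =>
    Real.rpow_le_rpow (ha0 j).le (ha hij) (div_pos hα hz).le
  have hXpd : (R * A * R).PosDef := by
    have h1 : A.PosDef := conj_pd hU (ha0' _)
    have h2 : Function.Injective R.vecMul := by
      apply Matrix.vecMul_injective_of_isUnit
      exact IsUnit.of_mul_eq_one T hRT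
    have := h1.mul_mul_conjTranspose_same (B := R) h2
    rwa [hRh.eq] at this
  set c := eigDown hXpd.1 with hc
  have hX : Dg (R * A * R) c := dg_eigDown hXpd.1
  have hca : Antitone c := antitone_eigDown hXpd.1
  have hc0 : ∀ i, 0 < c i := hX.pos hXpd
  have hval : ∀ i, (a i ^ (α / z) * s i ^ ((1 - α) / z)) ^ z = a i ^ α * s i ^ (1 - α) := by
    intro i
    rw [Real.mul_rpow (ha0' _ i).le (hp0 _ i).le, ← Real.rpow_mul (ha0 i).le,
      ← Real.rpow_mul (hs0 i).le, div_mul_cancel₀ _ hz.ne', div_mul_cancel₀ _ hz.ne']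
  refine ⟨c, hc0, ?_, ?_, ?_⟩
  · obtain ⟨W, hW, hWX⟩ := hX
    rw [hWX, mpow_conj hW, conj_trace hW, Complex.ofReal_re]
  · intro hα1
    have hRR : Dg (R * R) (fun i => s i ^ ((1 - α) / z)) := by
      refine ⟨V, hV, ?_⟩
      rw [hR, cj_mul hV]
      congr 4
      ext i
      rw [← Real.rpow_add (hs0 i)]
      congr 2
      field_simp
      ring
    have hsa : Antitone (fun i => s i ^ ((1 - α) / z)) := fun i j hij =>
      Real.rpow_le_rpow (hs0 j).le (hs hij) (div_pos (by linarith) hz).le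
    have := maj_sorted hc0 (fun i => mul_pos (ha0' (α / z) i) (hp0 ((1 - α) / z) i)) hca ?_ hz
    · simpa only [hval] using this
    · intro k hk
      have := lidskii hRh hca hsa hAa hc0 (hp0 _) (ha0' _) hX hRR hAd (pre d k)
      rw [card_pre hk] at this
      rw [Finset.prod_mul_distrib, mul_comm]
      exact this
  · intro hα1
    have hTT : Dg (T * T) (fun i => s i ^ (-((1 - α) / z))) := by
      refine ⟨V, hV, ?_⟩
      rw [hT, cj_mul hV]
      congr 4
      ext i
      rw [← Real.rpow_add (hs0 i)]
      congr 2
      field_simp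
      ring
    have hsa : Antitone (fun i => s i ^ (-((1 - α) / z))) := fun i j hij =>
      Real.rpow_le_rpow (hs0 j).le (hs hij) (by
        rw [← neg_div]
        exact (div_pos (by linarith) hz).le)
    have hA' : Dg (T * (R * A * R) * T) (fun i => a i ^ (α / z)) := by
      have : T * (R * A * R) * T = A := by
        calc _ = (T * R) * A * (R * T) := by simp only [Matrix.mul_assoc]
          _ = A := by rw [hTR, hRT, Matrix.one_mul, Matrix.mul_one]
      rw [this]; exact hAd
    have := maj_all (fun i => mul_pos (ha0' (α / z) i) (hp0 ((1 - α) / z) i)) hc0 ?_ hz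
    · simpa only [hval] using this
    · intro I
      have := lidskii hTh hAa hsa hca (ha0' _) (hp0 _) hc0 hA' hTT hX I
      rw [Finset.prod_mul_distrib]
      have h3 : (∏ i ∈ I, s i ^ (-((1 - α) / z))) * ∏ i ∈ I, s i ^ ((1 - α) / z) = 1 := by
        rw [← Finset.prod_mul_distrib]
        refine Finset.prod_eq_one fun i _ => ?_
        rw [← Real.rpow_add (hs0 i), neg_add_cancel, Real.rpow_zero]
      calc _ ≤ ((∏ i ∈ I, s i ^ (-((1 - α) / z))) * ∏ i ∈ pre d I.card, c i) *
            ∏ i ∈ I, s i ^ ((1 - α) / z) :=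
            mul_le_mul_of_nonneg_right this (Finset.prod_pos fun i _ => hp0 _ i).le
        _ = ((∏ i ∈ I, s i ^ (-((1 - α) / z))) * ∏ i ∈ I, s i ^ ((1 - α) / z)) *
            ∏ i ∈ pre d I.card, c i := by ring
        _ = _ := by rw [h3, one_mul]

end helpers

/-- for positive definite density matrices `ρ, σ` and `(α,z)` with either
`α ∈ (0,1)∪(1,∞)` and `z ∈ (0,1)`, or `1 < α ≤ 2, α/2 ≤ z ≤ α`, or `2 ≤ α, α−1 ≤ z ≤ α`,
the minimum of `S_{α,z}(ρ‖UσU*)` over unitaries `U` equals `S_α^C(λ↓(ρ)‖λ↓(σ))`. -/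
theorem stmt_8 {d : ℕ} (ρ σ : Matrix (Fin d) (Fin d) ℂ)
    (hρ : ρ.PosDef) (hσ : σ.PosDef) (hρ1 : ρ.trace = 1) (hσ1 : σ.trace = 1)
    (α z : ℝ)
    (hαz : ((α ∈ Set.Ioo (0 : ℝ) 1 ∨ 1 < α) ∧ z ∈ Set.Ioo (0 : ℝ) 1) ∨
           (1 < α ∧ α ≤ 2 ∧ α / 2 ≤ z ∧ z ≤ α) ∨ (2 ≤ α ∧ α - 1 ≤ z ∧ z ≤ α)) :
    IsLeast {x : ℝ | ∃ U ∈ Matrix.unitaryGroup (Fin d) ℂ,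
        x = Saz ρ (U * σ * star U) α z}
      (SazC (eigDown hρ.1) (eigDown hσ.1) α) := by
  have hα : 0 < α := by
    rcases hαz with ⟨h | h, _⟩ | h | h
    · exact h.1
    · linarith
    · linarith [h.1]
    · linarith [h.1]
  have hα1 : α < 1 ∨ 1 < α := by
    rcases hαz with ⟨h | h, _⟩ | h | h
    · exact Or.inl h.2
    · exact Or.inr h
    · exact Or.inr h.1
    · exact Or.inr (by linarith [h.1])
  have hz : 0 < z := by
    rcases hαz with ⟨_, h⟩ | h | h
    · exact h.1
    · linarith [h.2.2.1]
    · linarith [h.1, h.2.1]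
  have hd : Nonempty (Fin d) := by
    by_contra hne
    rw [not_nonempty_iff] at hne
    simp [Matrix.trace] at hρ1
  have haa := antitone_eigDown hρ.1
  have hsa := antitone_eigDown hσ.1
  have ha0 := (dg_eigDown hρ.1).pos hρ
  have hs0 := (dg_eigDown hσ.1).pos hσ
  obtain ⟨U, hU, hUρ⟩ := dg_eigDown hρ.1
  obtain ⟨V, hV, hVσ⟩ := dg_eigDown hσ.1
  generalize eigDown hρ.1 = a at *
  generalize eigDown hσ.1 = s at *
  have hconj : ∀ W : Matrix (Fin d) (Fin d) ℂ, W * σ * star W =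
      (W * V) * Matrix.diagonal (fun i => ((s i : ℝ) : ℂ)) * star (W * V) := by
    intro W
    rw [hVσ, star_mul]
    simp only [Matrix.mul_assoc]
  have hT0 : 0 < ∑ i, a i ^ α * s i ^ (1 - α) :=
    Finset.sum_pos (fun i _ => mul_pos (Real.rpow_pos_of_pos (ha0 i) _)
      (Real.rpow_pos_of_pos (hs0 i) _)) Finset.univ_nonempty
  constructor
  · refine ⟨U * star V, mul_mem hU (Unitary.star_mem hV), ?_⟩
    have hUV : U * star V * V = U := by rw [Matrix.mul_assoc, un1 hV, Matrix.mul_one]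
    rw [hconj, hUV, hUρ]
    unfold SazC Saz FazC Faz
    rw [mpow_conj hU, mpow_conj hU, cj_mul hU, cj_mul hU, mpow_conj hU, conj_trace hU,
      Complex.ofReal_re]
    congr 3
    refine Finset.sum_congr rfl fun i _ => ?_
    have e : s i ^ ((1 - α) / (2 * z)) * a i ^ (α / z) * s i ^ ((1 - α) / (2 * z)) =
        a i ^ (α / z) * s i ^ ((1 - α) / z) := by
      have : s i ^ ((1 - α) / z) = s i ^ ((1 - α) / (2 * z)) * s i ^ ((1 - α) / (2 * z)) := by
        rw [← Real.rpow_add (hs0 i)]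
        congr 1
        field_simp
        ring
      rw [this]; ring
    rw [e, Real.mul_rpow (Real.rpow_pos_of_pos (ha0 i) _).le (Real.rpow_pos_of_pos (hs0 i) _).le,
      ← Real.rpow_mul (ha0 i).le, ← Real.rpow_mul (hs0 i).le, div_mul_cancel₀ _ hz.ne',
      div_mul_cancel₀ _ hz.ne']
  · rintro x ⟨W, hW, rfl⟩
    rw [hconj, hUρ]
    obtain ⟨c, hc0, htr, hlt, hgt⟩ := core hU (mul_mem hW hV) haa hsa ha0 hs0 hα hz
    unfold SazC Saz FazC Faz
    rw [htr]
    have hc : 0 < ∑ i, c i ^ z :=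
      Finset.sum_pos (fun i _ => Real.rpow_pos_of_pos (hc0 i) _) Finset.univ_nonempty
    have h1α : 0 < 1 / α := by positivity
    rcases hα1 with h | h
    · refine mul_le_mul_of_nonpos_left ?_ (div_nonpos_of_nonneg_of_nonpos hα.le (by linarith))
      exact Real.log_le_log (Real.rpow_pos_of_pos hc _) (Real.rpow_le_rpow hc.le (hlt h) h1α.le)
    · refine mul_le_mul_of_nonneg_left ?_ (div_nonneg hα.le (by linarith))
      exact Real.log_le_log (Real.rpow_pos_of_pos hT0 _) (Real.rpow_le_rpow hT0.le (hgt h) h1α.le)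
end

section
/- Let α ∈ (0,1) and let p, q, q' ∈ ℝ^d be probability vectors with strictly positive entries such that q' is majorized by q. Then Σ_{j=1}^d (p↑_j)^α (q'↓_j)^{1−α} ≥ Σ_{j=1}^d (p↑_j)^α (q↓_j)^{1−α}, where p↑ is p sorted increasingly and q↓, q'↓ are q, q' sorted decreasingly. (Applied with q' = λ(Φ(σ)) and q = λ(σ), where Φ(σ) is majorized by σ for any unital quantum channel Φ, this gives F_α^C(λ↑(ρ), λ↓(Φ(σ))) ≥ F_α^C(λ↑(ρ), λ↓(σ)).) -/
open Matrix
open scoped ComplexOrder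

/-- `q'` is majorized by `q`: for every `k`, the sum of the `k` largest entries of `q'`
is at most the sum of the `k` largest entries of `q`, with equal total sums. -/
def MajorizedBy {d : ℕ} (q' q : Fin d → ℝ) : Prop :=
  (∀ k : ℕ,
      ∑ j ∈ Finset.univ.filter (fun j : Fin d => (j : ℕ) < k), sortDown q' j ≤
        ∑ j ∈ Finset.univ.filter (fun j : Fin d => (j : ℕ) < k), sortDown q j) ∧
    ∑ j, q' j = ∑ j, q j

theorem aux_abel : ∀ (n : ℕ) (c z : Fin (n + 1) → ℝ), Monotone c →
    (∀ k : ℕ, 0 ≤ ∑ j : Fin (n + 1), if (j : ℕ) < k then z j else 0) →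
    ∑ j, c j * z j ≤ c (Fin.last n) * ∑ j, z j := by
  intro n
  induction n with
  | zero => intro c z _ _; simp
  | succ n ih =>
    intro c z hc hz
    have hpre : ∀ k : ℕ, 0 ≤ ∑ j : Fin (n + 1), if (j : ℕ) < k then z j.castSucc else 0 := by
      intro k
      have h := hz (min k (n + 1))
      rw [Fin.sum_univ_castSucc] at h
      simpa [Fin.is_le] using h
    have h1 := ih (fun j => c j.castSucc) (fun j => z j.castSucc)
      (fun a b hab => hc (Fin.castSucc_le_castSucc_iff.2 hab)) hpre
    have h2 : 0 ≤ ∑ j : Fin (n + 1), z j.castSucc := by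
      simpa [Fin.is_le] using hpre (n + 1)
    have h3 : c (Fin.last n).castSucc ≤ c (Fin.last (n + 1)) := hc (Fin.le_last _)
    rw [Fin.sum_univ_castSucc, Fin.sum_univ_castSucc (f := z)]
    have h4 := mul_le_mul_of_nonneg_right h3 h2
    beta_reduce at h1
    linarith

theorem aux_tangent (s x y : ℝ) (hs0 : 0 ≤ s) (hs1 : s ≤ 1) (hx : 0 < x) (hy : 0 < y) :
    x ^ s ≤ y ^ s + s * y ^ (s - 1) * (x - y) := by
  have ht : -1 ≤ x / y - 1 := by
    have : 0 < x / y := div_pos hx hy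
    linarith
  have h := rpow_one_add_le_one_add_mul_self ht hs0 hs1
  have e : 1 + (x / y - 1) = x / y := by ring
  rw [e, Real.div_rpow hx.le hy.le, div_le_iff₀ (Real.rpow_pos_of_pos hy s)] at h
  refine h.trans (le_of_eq ?_)
  rw [Real.rpow_sub_one hy.ne']
  field_simp

/-- for `α ∈ (0,1)` and probability vectors `p, q, q'` with positive entries
such that `q'` is majorized by `q`,
`Σ_j (p↑_j)^α (q'↓_j)^{1−α} ≥ Σ_j (p↑_j)^α (q↓_j)^{1−α}`. -/
theorem stmt_9 {d : ℕ} (α : ℝ) (hα : α ∈ Set.Ioo (0 : ℝ) 1)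
    (p q q' : Fin d → ℝ)
    (hp : ∀ i, 0 < p i) (hq : ∀ i, 0 < q i) (hq' : ∀ i, 0 < q' i)
    (hps : ∑ i, p i = 1) (hqs : ∑ i, q i = 1) (hq's : ∑ i, q' i = 1)
    (hmaj : MajorizedBy q' q) :
    ∑ j, sortUp p j ^ α * sortDown q j ^ (1 - α) ≤
      ∑ j, sortUp p j ^ α * sortDown q' j ^ (1 - α) := by
  obtain ⟨h0, h1⟩ := hα
  rcases d with _ | n
  · simp
  have upos : ∀ r : Fin (n + 1) → ℝ, (∀ i, 0 < r i) → ∀ i, 0 < sortUp r i := fun r hr i => hr _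
  have umono : ∀ r : Fin (n + 1) → ℝ, Monotone (sortUp r) := fun r => Tuple.monotone_sort r
  have dsum : ∀ r : Fin (n + 1) → ℝ, ∑ i, sortDown r i = ∑ i, r i := fun r =>
    (Equiv.sum_comp Fin.revPerm (sortUp r)).trans (Equiv.sum_comp (Tuple.sort r) r)
  have hP := upos p hp
  have hX : ∀ i, 0 < sortDown q i := fun i => upos q hq _
  have hY : ∀ i, 0 < sortDown q' i := fun i => upos q' hq' _
  have hYa : Antitone (sortDown q') := fun a b hab => umono q' (Fin.rev_le_rev.2 hab)
  have key := aux_abel n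
    (fun j => sortUp p j ^ α * ((1 - α) * sortDown q' j ^ ((1 - α) - 1)))
    (fun j => sortDown q j - sortDown q' j)
    (by
      intro a b hab
      have i1 : sortUp p a ^ α ≤ sortUp p b ^ α :=
        Real.rpow_le_rpow (hP a).le (umono p hab) h0.le
      have i2 : sortDown q' a ^ ((1 - α) - 1) ≤ sortDown q' b ^ ((1 - α) - 1) :=
        Real.rpow_le_rpow_of_nonpos (hY b) (hYa hab) (by linarith)
      have i3 := Real.rpow_pos_of_pos (hY a) ((1 - α) - 1)
      have i4 := Real.rpow_pos_of_pos (hP b) α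
      exact mul_le_mul i1 (mul_le_mul_of_nonneg_left i2 (by linarith))
        (mul_nonneg (by linarith) i3.le) i4.le)
    (by
      intro k
      have h := hmaj.1 k
      rw [← Finset.sum_filter, Finset.sum_sub_distrib]
      linarith)
  rw [Finset.sum_sub_distrib (f := sortDown q), dsum, dsum, hqs, hq's, sub_self, mul_zero] at key
  have hle : ∑ j, sortUp p j ^ α * sortDown q j ^ (1 - α) ≤
      ∑ j, (sortUp p j ^ α * sortDown q' j ^ (1 - α) +
        sortUp p j ^ α * ((1 - α) * sortDown q' j ^ ((1 - α) - 1)) *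
          (sortDown q j - sortDown q' j)) := by
    refine Finset.sum_le_sum fun j _ => ?_
    have h := mul_le_mul_of_nonneg_left
      (aux_tangent (1 - α) _ _ (by linarith) (by linarith) (hX j) (hY j))
      (Real.rpow_pos_of_pos (hP j) α).le
    refine h.trans (le_of_eq ?_)
    ring
  rw [Finset.sum_add_distrib] at hle
  linarith
end

section
/- Let α ∈ (1,∞) and let p, q, q' ∈ ℝ^d be probability vectors with strictly positive entries such that q' is majorized by q. Then Σ_{j=1}^d (p↑_j)^α (q'↓_j)^{1−α} ≤ Σ_{j=1}^d (p↑_j)^α (q↓_j)^{1−α}, where p↑ is p sorted increasingly and q↓, q'↓ are q, q' sorted decreasingly. (Applied with q' = λ(Φ(σ)) and q = λ(σ), where Φ(σ) is majorized by σ for any unital quantum channel Φ, this gives F_α^C(λ↑(ρ), λ↓(Φ(σ))) ≤ F_α^C(λ↑(ρ), λ↓(σ)).) -/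
open Matrix
open scoped ComplexOrder

theorem abel_aux_s10 (n : ℕ) : ∀ (c e : Fin n → ℝ) (C : ℝ), Monotone c → (∀ i, c i ≤ C) →
    (∀ k ≤ n, ∑ j ∈ Finset.univ.filter (fun j : Fin n => (j : ℕ) < k), e j ≤ 0) →
    C * ∑ j, e j ≤ ∑ j, c j * e j := by
  induction n with
  | zero => intro c e C _ _ _; simp
  | succ n ih =>
    intro c e C hc hC he
    have h1 := ih (fun i => c i.castSucc) (fun i => e i.castSucc) (c (Fin.last n))
      (fun i j hij => hc (Fin.castSucc_le_castSucc_iff.mpr hij)) (fun i => hc (Fin.le_last _)) (by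
        intro k hk
        have := he k (by omega)
        rw [Finset.sum_filter, Fin.sum_univ_castSucc] at this
        rw [Finset.sum_filter]
        have h2 : ¬ (n < k) := by omega
        simpa [h2] using this)
    have htot : ∑ j, e j ≤ 0 := by
      have := he (n+1) le_rfl
      rwa [Finset.filter_true_of_mem (fun j _ => j.isLt)] at this
    have h3 := mul_le_mul_of_nonpos_right (hC (Fin.last n)) htot
    rw [Fin.sum_univ_castSucc (f := fun j => c j * e j)]
    rw [Fin.sum_univ_castSucc] at h3 ⊢
    linarith

theorem tangent_aux {α x y : ℝ} (hα : 1 < α) (hx : 0 < x) (hy : 0 < y) :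
    x ^ (1 - α) + (1 - α) * x ^ (-α) * (y - x) ≤ y ^ (1 - α) := by
  have hs : 0 < y / x := div_pos hy hx
  have h1 : 1 + (1 - α) * (y / x - 1) ≤ (y / x) ^ (1 - α) := by
    rw [Real.rpow_def_of_pos hs]
    have := Real.add_one_le_exp (Real.log (y / x) * (1 - α))
    have := Real.log_le_sub_one_of_pos hs
    nlinarith
  rw [Real.div_rpow hy.le hx.le, le_div_iff₀ (by positivity)] at h1
  have h2 : x ^ (1 - α) = x * x ^ (-α) := by
    rw [sub_eq_add_neg, Real.rpow_add hx, Real.rpow_one]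
  refine le_trans (le_of_eq ?_) h1
  rw [h2]
  field_simp

theorem sortUp_mono {d : ℕ} (p : Fin d → ℝ) : Monotone (sortUp p) := Tuple.monotone_sort p

theorem sum_sortDown {d : ℕ} (p : Fin d → ℝ) : ∑ j, sortDown p j = ∑ j, p j := by
  unfold sortDown sortUp
  rw [← Equiv.sum_comp (Fin.revPerm.trans (Tuple.sort p)) p]
  rfl

/-- for `α ∈ (1,∞)` and probability vectors `p, q, q'` with positive entries
such that `q'` is majorized by `q`,
`Σ_j (p↑_j)^α (q'↓_j)^{1−α} ≤ Σ_j (p↑_j)^α (q↓_j)^{1−α}`. -/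
theorem stmt_10 {d : ℕ} (α : ℝ) (hα : 1 < α)
    (p q q' : Fin d → ℝ)
    (hp : ∀ i, 0 < p i) (hq : ∀ i, 0 < q i) (hq' : ∀ i, 0 < q' i)
    (hps : ∑ i, p i = 1) (hqs : ∑ i, q i = 1) (hq's : ∑ i, q' i = 1)
    (hmaj : MajorizedBy q' q) :
    ∑ j, sortUp p j ^ α * sortDown q' j ^ (1 - α) ≤
      ∑ j, sortUp p j ^ α * sortDown q j ^ (1 - α) := by
  have hx : ∀ j, 0 < sortDown q' j := fun j => hq' _
  have hy : ∀ j, 0 < sortDown q j := fun j => hq _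
  have ha : ∀ j, 0 < sortUp p j := fun j => hp _
  have hxm : Antitone (sortDown q') := fun i j hij => sortUp_mono q' (Fin.rev_le_rev.mpr hij)
  set c : Fin d → ℝ := fun j => sortUp p j ^ α * sortDown q' j ^ (-α) with hc
  have hc0 : ∀ j, 0 ≤ c j := fun j => by have := hx j; have := ha j; positivity
  have hcm : Monotone c := by
    intro i j hij
    have := hx i; have := hx j; have := ha i; have := ha j
    refine mul_le_mul (Real.rpow_le_rpow (ha i).le (sortUp_mono p hij) (by linarith))
      (Real.rpow_le_rpow_of_nonpos (hx j) (hxm hij) (by linarith)) (by positivity) (by positivity)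
  have key := abel_aux_s10 d c (fun j => sortDown q' j - sortDown q j) (∑ j, c j) hcm
    (fun i => Finset.single_le_sum (fun j _ => hc0 j) (Finset.mem_univ i)) (by
      intro k _
      rw [Finset.sum_sub_distrib]
      linarith [hmaj.1 k])
  rw [Finset.sum_sub_distrib, sum_sortDown, sum_sortDown, hmaj.2, sub_self, mul_zero] at key
  have h : ∑ j, (sortUp p j ^ α * sortDown q' j ^ (1 - α)
      + (α - 1) * (c j * (sortDown q' j - sortDown q j))) ≤
      ∑ j, sortUp p j ^ α * sortDown q j ^ (1 - α) := by
    refine Finset.sum_le_sum fun j _ => ?_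
    have h1 := mul_le_mul_of_nonneg_left (tangent_aux hα (hx j) (hy j))
      (Real.rpow_nonneg (ha j).le α)
    refine le_trans (le_of_eq ?_) h1
    simp only [hc]
    ring
  rw [Finset.sum_add_distrib, ← Finset.mul_sum] at h
  have := mul_nonneg (sub_nonneg.mpr hα.le) key
  linarith
end

section
/- Let ρ and σ be positive definite d×d density matrices and let (α,z) satisfy 0 < α < 1 and z ≥ max{α, 1−α}. Then the minimum of F_{α,z}(ρ, Σ_i p_i U_i σ U_i*) over all mixed unitary channels — i.e., over all finite families of d×d unitary matrices U_i and weights p_i ≥ 0 with Σ_i p_i = 1 — equals F_α^C(λ↓(ρ), λ↑(σ)), and it is attained by a single unitary conjugation. -/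
open Matrix
open scoped ComplexOrder

noncomputable def cj {d : ℕ} (V : Matrix (Fin d) (Fin d) ℂ) (x : Fin d → ℝ) :
    Matrix (Fin d) (Fin d) ℂ :=
  V * Matrix.diagonal (fun i => ((x i : ℝ) : ℂ)) * star V

lemma cj_herm {d : ℕ} (V : Matrix (Fin d) (Fin d) ℂ) (x : Fin d → ℝ) :
    (cj V x).IsHermitian := by
  unfold cj Matrix.IsHermitian
  simp only [star_eq_conjTranspose, conjTranspose_mul, conjTranspose_conjTranspose,
    diagonal_conjTranspose, Matrix.mul_assoc]
  congr 3
  ext i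
  simp

lemma herm_cj {d : ℕ} {A : Matrix (Fin d) (Fin d) ℂ} (hA : A.IsHermitian) :
    A = cj (hA.eigenvectorUnitary : Matrix (Fin d) (Fin d) ℂ) hA.eigenvalues := by
  have := hA.spectral_theorem
  rw [Unitary.conjStarAlgAut_apply] at this
  exact this

lemma cj_apply {d : ℕ} (V : Matrix (Fin d) (Fin d) ℂ) (x : Fin d → ℝ) (i j : Fin d) :
    cj V x i j = ∑ k, V i k * (x k : ℂ) * star (V j k) := by
  simp [cj, Matrix.mul_apply, Matrix.diagonal_apply, star_eq_conjTranspose]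

lemma cj_perm {d : ℕ} (V : Matrix (Fin d) (Fin d) ℂ) (x : Fin d → ℝ) (π : Equiv.Perm (Fin d)) :
    cj (V.submatrix id π) (x ∘ π) = cj V x := by
  ext i j
  simp only [cj_apply, submatrix_apply, id, Function.comp]
  exact Equiv.sum_comp π (fun k => V i k * (x k : ℂ) * star (V j k))

lemma perm_unitary {d : ℕ} {V : Matrix (Fin d) (Fin d) ℂ} (hV : V ∈ unitaryGroup (Fin d) ℂ)
    (π : Equiv.Perm (Fin d)) : V.submatrix id π ∈ unitaryGroup (Fin d) ℂ := by
  rw [mem_unitaryGroup_iff] at hV ⊢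
  have h : ∀ W : Matrix (Fin d) (Fin d) ℂ, W * star W = cj W (fun _ => 1) := by
    intro W; simp [cj]
  rw [h] at hV ⊢
  rw [← hV, ← cj_perm V _ π]; rfl

lemma cj_mul_s15 {d : ℕ} {V : Matrix (Fin d) (Fin d) ℂ} (hV : V ∈ unitaryGroup (Fin d) ℂ)
    (x y : Fin d → ℝ) : cj V x * cj V y = cj V (fun i => x i * y i) := by
  have h := mem_unitaryGroup_iff'.1 hV
  unfold cj
  calc _ = V * diagonal (fun i => ((x i : ℝ) : ℂ)) * (star V * V) *
        diagonal (fun i => ((y i : ℝ) : ℂ)) * star V := by simp only [Matrix.mul_assoc]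
    _ = _ := by
      rw [h, Matrix.mul_one, Matrix.mul_assoc V, diagonal_mul_diagonal]
      simp

lemma cj_trace {d : ℕ} {V : Matrix (Fin d) (Fin d) ℂ} (hV : V ∈ unitaryGroup (Fin d) ℂ)
    (x : Fin d → ℝ) : (cj V x).trace.re = ∑ i, x i := by
  have h := mem_unitaryGroup_iff'.1 hV
  unfold cj
  rw [Matrix.trace_mul_comm, ← Matrix.mul_assoc, h]
  simp [Matrix.trace]

lemma cj_det {d : ℕ} {V : Matrix (Fin d) (Fin d) ℂ} (hV : V ∈ unitaryGroup (Fin d) ℂ)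
    (x : Fin d → ℝ) : (cj V x).det = ((∏ i, x i : ℝ) : ℂ) := by
  have h := mem_unitaryGroup_iff'.1 hV
  unfold cj
  rw [Matrix.det_mul, Matrix.det_mul, mul_right_comm, ← Matrix.det_mul, Matrix.det_mul_comm, h]
  simp

lemma cj_conj {d : ℕ} (V W : Matrix (Fin d) (Fin d) ℂ) (x : Fin d → ℝ) :
    W * cj V x * star W = cj (W * V) x := by
  unfold cj
  simp only [star_mul, Matrix.mul_assoc]

lemma mpow_cj {d : ℕ} {V : Matrix (Fin d) (Fin d) ℂ} (hV : V ∈ unitaryGroup (Fin d) ℂ)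
    (x : Fin d → ℝ) (t : ℝ) : mpow (cj V x) t = cj V (fun i => x i ^ t) := by
  have hA := cj_herm V x
  unfold mpow
  rw [dif_pos hA]
  set W : Matrix (Fin d) (Fin d) ℂ := hA.eigenvectorUnitary.1 with hWdef
  have hW : W ∈ unitaryGroup (Fin d) ℂ := hA.eigenvectorUnitary.2
  set e := hA.eigenvalues
  have h1 : cj V x = cj W e := herm_cj hA
  have hV1 := mem_unitaryGroup_iff'.1 hV
  have hV2 := mem_unitaryGroup_iff.1 hV
  have hW1 := mem_unitaryGroup_iff'.1 hW
  have hW2 := mem_unitaryGroup_iff.1 hW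
  have h2 : diagonal (fun i => ((x i : ℝ) : ℂ)) * (star V * W) =
      (star V * W) * diagonal (fun i => ((e i : ℝ) : ℂ)) := by
    have := congrArg (fun M => star V * M * W) h1
    simp only [cj] at this
    calc _ = (star V * V) * diagonal (fun i => ((x i : ℝ) : ℂ)) * (star V * W) := by
          rw [hV1, Matrix.one_mul]
      _ = star V * (V * diagonal (fun i => ((x i : ℝ) : ℂ)) * star V) * W := by
          simp only [Matrix.mul_assoc]
      _ = _ := this
      _ = (star V * W) * diagonal (fun i => ((e i : ℝ) : ℂ)) * (star W * W) := by
          simp only [Matrix.mul_assoc]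
      _ = _ := by rw [hW1, Matrix.mul_one]
  have h3 : diagonal (fun i => ((x i ^ t : ℝ) : ℂ)) * (star V * W) =
      (star V * W) * diagonal (fun i => ((e i ^ t : ℝ) : ℂ)) := by
    ext j k
    have := congrFun (congrFun h2 j) k
    rw [diagonal_mul, mul_diagonal] at this ⊢
    by_cases hM : (star V * W) j k = 0
    · simp [hM]
    · have h5 : ((x j : ℝ) : ℂ) = e k := by
        rw [mul_comm] at this
        exact mul_left_cancel₀ hM this
      have h6 : x j = e k := by exact_mod_cast h5
      rw [h6, mul_comm]
  unfold cj
  calc _ = (V * star V) * W * diagonal (fun i => ((e i ^ t : ℝ) : ℂ)) * star W := by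
        rw [hV2, Matrix.one_mul]
    _ = V * ((star V * W) * diagonal (fun i => ((e i ^ t : ℝ) : ℂ))) * star W := by
        simp only [Matrix.mul_assoc]
    _ = V * diagonal (fun i => ((x i ^ t : ℝ) : ℂ)) * star V * (W * star W) := by
        rw [← h3]; simp only [Matrix.mul_assoc]
    _ = _ := by rw [hW2, Matrix.mul_one]

lemma cj_quad {d : ℕ} (V : Matrix (Fin d) (Fin d) ℂ) (x : Fin d → ℝ) (v : Fin d → ℂ) :
    (star v ⬝ᵥ (cj V x *ᵥ v)).re = ∑ i, x i * Complex.normSq ((star V *ᵥ v) i) := by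
  have h : star v ⬝ᵥ (cj V x *ᵥ v) = ∑ i, (x i : ℂ) * (Complex.normSq ((star V *ᵥ v) i) : ℂ) := by
    unfold cj
    rw [← Matrix.mulVec_mulVec, ← Matrix.mulVec_mulVec, Matrix.dotProduct_mulVec]
    have : star v ᵥ* V = star (star V *ᵥ v) := by
      rw [Matrix.star_mulVec, star_eq_conjTranspose, conjTranspose_conjTranspose]
    rw [this]
    simp only [dotProduct, Matrix.mulVec_diagonal, Pi.star_apply]
    refine Finset.sum_congr rfl fun i _ => ?_
    rw [← Complex.mul_conj]
    simp only [RCLike.star_def]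
    ring
  rw [h]
  simp [← Complex.ofReal_mul, ← Complex.ofReal_sum]

lemma weyl_s15 {d : ℕ} {V W : Matrix (Fin d) (Fin d) ℂ} (hV : V ∈ unitaryGroup (Fin d) ℂ)
    (hW : W ∈ unitaryGroup (Fin d) ℂ) {x y : Fin d → ℝ} (hx : Antitone x) (hy : Antitone y)
    (h : (cj W y - cj V x).PosSemidef) (i : Fin d) : x i ≤ y i := by
  classical
  let M : Matrix (Fin d) (Fin d) ℂ := fun j => if j < i then (star W * V) j else
    if j = i then 0 else Pi.single j 1
  have hM : M.det = 0 := Matrix.det_eq_zero_of_row_eq_zero i (fun k => by simp [M])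
  obtain ⟨u, hu, hMu⟩ := Matrix.exists_mulVec_eq_zero_iff.2 hM
  have hu1 : ∀ k, i < k → u k = 0 := by
    intro k hk
    have := congrFun hMu k
    simpa [M, Matrix.mulVec, not_lt.2 hk.le, hk.ne'] using this
  have hu2 : ∀ j, j < i → ((star W * V) *ᵥ u) j = 0 := by
    intro k hk
    have := congrFun hMu k
    simpa [M, Matrix.mulVec, hk] using this
  have hV1 := mem_unitaryGroup_iff'.1 hV
  have hW2 := mem_unitaryGroup_iff.1 hW
  have hn := h.re_dotProduct_nonneg (V *ᵥ u)
  rw [Matrix.sub_mulVec, dotProduct_sub] at hn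
  simp only [map_sub, RCLike.re_to_complex] at hn
  rw [cj_quad, cj_quad, Matrix.mulVec_mulVec, Matrix.mulVec_mulVec, hV1, Matrix.one_mulVec] at hn
  have hI : ∑ j, Complex.normSq (((star W * V) *ᵥ u) j) = ∑ k, Complex.normSq (u k) := by
    have e1 := cj_quad W (fun _ => 1) (V *ᵥ u)
    have e2 := cj_quad V (fun _ => 1) (V *ᵥ u)
    have f1 : cj W (fun _ => 1) = 1 := by simpa [cj] using hW2
    have f2 : cj V (fun _ => 1) = 1 := by simpa [cj] using mem_unitaryGroup_iff.1 hV
    rw [f1] at e1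
    rw [f2, e1, Matrix.mulVec_mulVec, Matrix.mulVec_mulVec, hV1, Matrix.one_mulVec] at e2
    simpa using e2
  have hpos : 0 < ∑ k, Complex.normSq (u k) := by
    obtain ⟨k, hk⟩ := Function.ne_iff.1 hu
    exact Finset.sum_pos' (fun _ _ => Complex.normSq_nonneg _)
      ⟨k, Finset.mem_univ _, Complex.normSq_pos.2 hk⟩
  have hA : x i * ∑ k, Complex.normSq (u k) ≤ ∑ k, x k * Complex.normSq (u k) := by
    rw [Finset.mul_sum]
    refine Finset.sum_le_sum fun k _ => ?_
    rcases lt_or_ge i k with hk | hk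
    · simp [hu1 k hk]
    · exact mul_le_mul_of_nonneg_right (hx hk) (Complex.normSq_nonneg _)
  have hB : ∑ j, y j * Complex.normSq (((star W * V) *ᵥ u) j) ≤
      y i * ∑ j, Complex.normSq (((star W * V) *ᵥ u) j) := by
    rw [Finset.mul_sum]
    refine Finset.sum_le_sum fun k _ => ?_
    rcases lt_or_ge k i with hk | hk
    · simp [hu2 k hk]
    · exact mul_le_mul_of_nonneg_right (hy hk) (Complex.normSq_nonneg _)
  rw [hI] at hB
  by_contra hc
  push Not at hc
  have := mul_lt_mul_of_pos_right hc hpos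
  linarith

lemma hinge_integral {z : ℝ} (hz : 0 < z) (r : ℝ) :
    MeasureTheory.Integrable (fun θ : ℝ => max (r - θ) 0 * Real.exp (z * θ)) ∧
    ∫ θ : ℝ, max (r - θ) 0 * Real.exp (z * θ) = Real.exp (z * r) * (1 / z) ^ 2 := by
  have e : (fun θ : ℝ => max (r - θ) 0 * Real.exp (z * θ)) =
      fun θ => (fun u : ℝ => Real.exp (z * r) * (Set.Ioi (0 : ℝ)).indicator
        (fun u => u ^ (1 : ℝ) * Real.exp (-z * u ^ (1 : ℝ))) u) (r - θ) := by
    ext θ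
    beta_reduce
    by_cases h : 0 < r - θ
    · rw [Set.indicator_of_mem (by exact h), max_eq_left h.le, Real.rpow_one]
      rw [mul_left_comm, ← Real.exp_add]
      congr 2
      ring
    · rw [Set.indicator_of_notMem (by exact h), max_eq_right (not_lt.1 h)]
      simp
  have hi := (MeasureTheory.integrable_indicator_iff measurableSet_Ioi).2
    (integrableOn_rpow_mul_exp_neg_mul_rpow (p := 1) (s := 1) (b := z) (by norm_num) one_pos hz)
  rw [e]
  constructor
  · exact (hi.const_mul _).comp_sub_left r
  · rw [MeasureTheory.integral_sub_left_eq_self (fun u : ℝ => Real.exp (z * r) *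
      (Set.Ioi (0 : ℝ)).indicator (fun u => u ^ (1 : ℝ) * Real.exp (-z * u ^ (1 : ℝ))) u),
      MeasureTheory.integral_const_mul,
      MeasureTheory.integral_indicator measurableSet_Ioi]
    congr 1
    have := Real.integral_rpow_mul_exp_neg_mul_Ioi (a := 2) (r := z) two_pos hz
    have g : Real.Gamma 2 = 1 := by
      have := Real.Gamma_nat_eq_factorial 1
      norm_num at this
      simpa using this
    rw [g, mul_one] at this
    norm_num at this ⊢
    exact this

lemma sum_exp_le {d : ℕ} {z : ℝ} (hz : 0 < z) (r s : Fin d → ℝ)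
    (h : ∀ θ : ℝ, ∑ i, max (r i - θ) 0 ≤ ∑ i, max (s i - θ) 0) :
    ∑ i, Real.exp (z * r i) ≤ ∑ i, Real.exp (z * s i) := by
  have key : ∫ θ : ℝ, ∑ i, max (r i - θ) 0 * Real.exp (z * θ) ≤
      ∫ θ : ℝ, ∑ i, max (s i - θ) 0 * Real.exp (z * θ) := by
    apply MeasureTheory.integral_mono
    · exact MeasureTheory.integrable_finsetSum _ fun i _ => (hinge_integral hz _).1
    · exact MeasureTheory.integrable_finsetSum _ fun i _ => (hinge_integral hz _).1
    · intro θ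
      simp only
      rw [← Finset.sum_mul, ← Finset.sum_mul]
      exact mul_le_mul_of_nonneg_right (h θ) (Real.exp_pos _).le
  rw [MeasureTheory.integral_finsetSum _ fun i _ => (hinge_integral hz _).1,
    MeasureTheory.integral_finsetSum _ fun i _ => (hinge_integral hz _).1] at key
  simp only [(hinge_integral hz _).2] at key
  rw [← Finset.sum_mul, ← Finset.sum_mul] at key
  exact le_of_mul_le_mul_right key (by positivity)

lemma cj_psd {d : ℕ} (V : Matrix (Fin d) (Fin d) ℂ) {x : Fin d → ℝ} (hx : ∀ i, 0 ≤ x i) :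
    (cj V x).PosSemidef := by
  unfold cj
  rw [star_eq_conjTranspose]
  apply Matrix.PosSemidef.mul_mul_conjTranspose_same
  apply Matrix.PosSemidef.diagonal
  intro i
  simpa using hx i

lemma cj_sub {d : ℕ} (V : Matrix (Fin d) (Fin d) ℂ) (x y : Fin d → ℝ) :
    cj V x - cj V y = cj V (fun i => x i - y i) := by
  ext i j
  simp only [Matrix.sub_apply, cj_apply, ← Finset.sum_sub_distrib]
  refine Finset.sum_congr rfl fun k _ => ?_
  push_cast
  ring

lemma cj_const {d : ℕ} {V : Matrix (Fin d) (Fin d) ℂ} (hV : V ∈ unitaryGroup (Fin d) ℂ)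
    (r : ℝ) : cj V (fun _ => r) = (r : ℂ) • (1 : Matrix (Fin d) (Fin d) ℂ) := by
  have h := mem_unitaryGroup_iff.1 hV
  have : diagonal (fun _ : Fin d => (r : ℂ)) = (r : ℂ) • (1 : Matrix (Fin d) (Fin d) ℂ) := by
    rw [Matrix.smul_one_eq_diagonal]
  unfold cj
  rw [this]
  simp [h]

lemma exists_down {d : ℕ} {A : Matrix (Fin d) (Fin d) ℂ} (hA : A.IsHermitian) :
    ∃ V ∈ unitaryGroup (Fin d) ℂ, A = cj V (eigDown hA) :=
  ⟨_, perm_unitary hA.eigenvectorUnitary.2 (Fin.revPerm.trans (Tuple.sort hA.eigenvalues)), by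
    conv_lhs => rw [herm_cj hA, ← cj_perm _ _ (Fin.revPerm.trans (Tuple.sort hA.eigenvalues))]
    rfl⟩

lemma exists_up {d : ℕ} {A : Matrix (Fin d) (Fin d) ℂ} (hA : A.IsHermitian) :
    ∃ V ∈ unitaryGroup (Fin d) ℂ, A = cj V (eigUp hA) :=
  ⟨_, perm_unitary hA.eigenvectorUnitary.2 (Tuple.sort hA.eigenvalues), by
    conv_lhs => rw [herm_cj hA, ← cj_perm _ _ (Tuple.sort hA.eigenvalues)]
    rfl⟩

lemma eigUp_mono {d : ℕ} {A : Matrix (Fin d) (Fin d) ℂ} (hA : A.IsHermitian) :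
    Monotone (eigUp hA) := Tuple.monotone_sort _

lemma eigDown_anti {d : ℕ} {A : Matrix (Fin d) (Fin d) ℂ} (hA : A.IsHermitian) :
    Antitone (eigDown hA) := fun _ _ h => Tuple.monotone_sort hA.eigenvalues (Fin.rev_le_rev.2 h)

lemma hinge_le {d : ℕ} {V W Z : Matrix (Fin d) (Fin d) ℂ} (hV : V ∈ unitaryGroup (Fin d) ℂ)
    (hW : W ∈ unitaryGroup (Fin d) ℂ) (hZ : Z ∈ unitaryGroup (Fin d) ℂ) {a g c : Fin d → ℝ}
    (ha0 : ∀ i, 0 < a i) (hg0 : ∀ i, 0 < g i) (hc0 : ∀ i, 0 < c i)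
    (ha : Antitone a) (hg : Monotone g) (h : cj Z c = cj W g * cj V a * cj W g) (θ : ℝ) :
    ∑ i, max (Real.log (a i * (g i * g i)) - θ) 0 ≤ ∑ i, max (Real.log (c i) - θ) 0 := by
  set G := cj W (fun i => (g i)⁻¹) with hG
  have hGH : G * cj W g = 1 := by
    rw [hG, cj_mul_s15 hW]
    simp only [inv_mul_cancel₀ (hg0 _).ne']
    simpa using cj_const hW 1
  have hHG : cj W g * G = 1 := by
    rw [hG, cj_mul_s15 hW]
    simp only [mul_inv_cancel₀ (hg0 _).ne']
    simpa using cj_const hW 1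
  have hGc : Gᴴ = G := cj_herm _ _
  set m : Fin d → ℝ := fun i => max (c i) (Real.exp θ) with hm
  have hm0 : ∀ i, 0 < m i := fun i => lt_max_of_lt_left (hc0 i)
  set E := G * cj Z m * G with hE
  have hEh : E.IsHermitian := by
    have := Matrix.isHermitian_mul_mul_conjTranspose G (cj_herm Z m)
    rwa [hGc] at this
  obtain ⟨Q, hQ, hQE⟩ := exists_down hEh
  set ε := eigDown hEh
  have hε : Antitone ε := eigDown_anti hEh
  have conjpsd : ∀ x y : Fin d → ℝ, (∀ i, y i ≤ x i) →
      (G * cj Z x * G - G * cj Z y * G).PosSemidef := by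
    intro x y hxy
    have := (cj_psd Z (x := fun i => x i - y i) fun i => sub_nonneg.2 (hxy i)).mul_mul_conjTranspose_same G
    rw [← cj_sub, hGc, Matrix.mul_sub, Matrix.sub_mul] at this
    exact this
  have hA : cj V a = G * cj Z c * G := by
    rw [h]
    calc _ = (G * cj W g) * cj V a * (cj W g * G) := by rw [hGH, hHG]; simp
      _ = _ := by simp only [Matrix.mul_assoc]
  have h1 : ∀ i, a i ≤ ε i := by
    apply weyl_s15 hV hQ ha hε
    rw [← hQE, hA]
    exact conjpsd _ _ fun i => le_max_left _ _
  have h2 : ∀ i, (g i)⁻¹ * Real.exp θ * (g i)⁻¹ ≤ ε i := by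
    refine weyl_s15 (x := fun i => (g i)⁻¹ * Real.exp θ * (g i)⁻¹) hW hQ ?_ hε ?_
    · intro i j hij
      have h3 : (g j)⁻¹ ≤ (g i)⁻¹ := inv_anti₀ (hg0 i) (hg hij)
      have := inv_pos.2 (hg0 j)
      have := inv_pos.2 (hg0 i)
      dsimp only
      gcongr
    · rw [← hQE, ← cj_mul_s15 hW, ← cj_mul_s15 hW, cj_const hW, ← cj_const hZ]
      exact conjpsd _ _ fun i => le_max_right _ _
  have hε0 : ∀ i, 0 < ε i := fun i => (ha0 i).trans_le (h1 i)
  have hdet : ∏ i, ε i = (∏ i, (g i)⁻¹) * (∏ i, m i) * ∏ i, (g i)⁻¹ := by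
    have := congrArg Matrix.det hQE
    rw [hE, Matrix.det_mul, Matrix.det_mul, hG, cj_det hW, cj_det hZ, cj_det hQ] at this
    exact_mod_cast this.symm
  have hlog : ∑ i, Real.log (ε i * (g i * g i)) = ∑ i, Real.log (m i) := by
    rw [← Real.log_prod fun i _ => (mul_pos (hε0 i) (mul_pos (hg0 i) (hg0 i))).ne',
      ← Real.log_prod fun i _ => (hm0 i).ne', Finset.prod_mul_distrib, Finset.prod_mul_distrib,
      hdet, Finset.prod_inv_distrib]
    have : ∏ i, g i ≠ 0 := Finset.prod_ne_zero_iff.2 fun i _ => (hg0 i).ne'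
    congr 1
    field_simp
  calc _ ≤ ∑ i, (Real.log (ε i * (g i * g i)) - θ) := by
        refine Finset.sum_le_sum fun i _ => ?_
        have hgi := mul_pos (hg0 i) (hg0 i)
        apply max_le
        · have := Real.log_le_log (mul_pos (ha0 i) hgi) (mul_le_mul_of_nonneg_right (h1 i) hgi.le)
          linarith
        · rw [sub_nonneg, Real.le_log_iff_exp_le (mul_pos (hε0 i) hgi)]
          have := mul_le_mul_of_nonneg_right (h2 i) hgi.le
          have e : (g i)⁻¹ * Real.exp θ * (g i)⁻¹ * (g i * g i) = Real.exp θ := by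
            have := (hg0 i).ne'
            field_simp
          linarith
    _ = ∑ i, (Real.log (m i) - θ) := by
        rw [Finset.sum_sub_distrib, Finset.sum_sub_distrib, hlog]
    _ = _ := by
        refine Finset.sum_congr rfl fun i _ => ?_
        rw [hm]
        beta_reduce
        rcases le_total (c i) (Real.exp θ) with hi | hi
        · rw [max_eq_right hi, Real.log_exp, max_eq_right, sub_self]
          have := (Real.log_le_iff_le_exp (hc0 i)).2 hi
          linarith
        · rw [max_eq_left hi, max_eq_left]
          have := (Real.le_log_iff_exp_le (hc0 i)).2 hi
          linarith

lemma unitary_ineq {d : ℕ} {V W : Matrix (Fin d) (Fin d) ℂ} (hV : V ∈ unitaryGroup (Fin d) ℂ)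
    (hW : W ∈ unitaryGroup (Fin d) ℂ) {a g : Fin d → ℝ}
    (ha0 : ∀ i, 0 < a i) (hg0 : ∀ i, 0 < g i)
    (ha : Antitone a) (hg : Monotone g) {z : ℝ} (hz : 0 < z) :
    ∑ i, (a i * (g i * g i)) ^ z ≤ (mpow (cj W g * cj V a * cj W g) z).trace.re := by
  have hWc : (cj W g)ᴴ = cj W g := cj_herm _ _
  have hC : (cj W g * cj V a * cj W g).PosSemidef := by
    have := (cj_psd V fun i => (ha0 i).le).mul_mul_conjTranspose_same (cj W g)
    rwa [hWc] at this
  have hCe := herm_cj hC.1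
  have hZ : hC.1.eigenvectorUnitary.1 ∈ unitaryGroup (Fin d) ℂ := hC.1.eigenvectorUnitary.2
  generalize hC.1.eigenvectorUnitary.1 = Z at hCe hZ
  have hc := hC.eigenvalues_nonneg
  generalize hC.1.eigenvalues = c at hCe hc
  have hprod : ∏ i, c i ≠ 0 := by
    have := congrArg Matrix.det hCe
    rw [Matrix.det_mul, Matrix.det_mul, cj_det hW, cj_det hZ, cj_det hV] at this
    have e : (∏ i, g i) * (∏ i, a i) * (∏ i, g i) = ∏ i, c i := by exact_mod_cast this
    rw [← e]
    have h1 : 0 < ∏ i, g i := Finset.prod_pos fun i _ => hg0 i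
    have h2 : 0 < ∏ i, a i := Finset.prod_pos fun i _ => ha0 i
    positivity
  have hc0 : ∀ i, 0 < c i := fun i =>
    lt_of_le_of_ne (hc i) (Ne.symm (Finset.prod_ne_zero_iff.1 hprod i (Finset.mem_univ i)))
  have key := sum_exp_le hz _ _ (hinge_le hV hW hZ ha0 hg0 hc0 ha hg hCe.symm)
  rw [hCe, mpow_cj hZ, cj_trace hZ]
  have e : ∀ x : ℝ, 0 < x → x ^ z = Real.exp (z * Real.log x) := fun x hx => by
    rw [Real.rpow_def_of_pos hx, mul_comm]
  calc _ = _ := Finset.sum_congr rfl fun i _ => e _ (mul_pos (ha0 i) (mul_pos (hg0 i) (hg0 i)))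
    _ ≤ _ := key
    _ = _ := Finset.sum_congr rfl fun i _ => (e _ (hc0 i)).symm

lemma pow_alg {r t α z : ℝ} (hr : 0 < r) (ht : 0 < t) (hz : 0 < z) :
    (r ^ (α / z) * (t ^ ((1 - α) / (2 * z)) * t ^ ((1 - α) / (2 * z)))) ^ z
      = r ^ α * t ^ (1 - α) := by
  rw [← Real.rpow_add ht, Real.mul_rpow (by positivity) (by positivity), ← Real.rpow_mul hr.le,
    ← Real.rpow_mul ht.le]
  congr 2 <;> field_simp
  ring

lemma Q_lower {d : ℕ} {V W : Matrix (Fin d) (Fin d) ℂ} (hV : V ∈ unitaryGroup (Fin d) ℂ)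
    (hW : W ∈ unitaryGroup (Fin d) ℂ) {r t : Fin d → ℝ}
    (hr0 : ∀ i, 0 < r i) (ht0 : ∀ i, 0 < t i)
    (hr : Antitone r) (ht : Monotone t) {α z : ℝ} (hα : α ∈ Set.Ioo (0 : ℝ) 1) (hz : 0 < z) :
    FazC r t α ≤ Faz (cj V r) (cj W t) α z := by
  unfold FazC Faz
  have h1 := sub_pos.2 hα.2
  have h0 := hα.1
  apply Real.rpow_le_rpow
  · exact Finset.sum_nonneg fun i _ =>
      mul_nonneg (Real.rpow_nonneg (hr0 i).le _) (Real.rpow_nonneg (ht0 i).le _)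
  · rw [mpow_cj hV, mpow_cj hW]
    refine le_trans (le_of_eq ?_) (unitary_ineq hV hW (fun i => Real.rpow_pos_of_pos (hr0 i) _)
      (fun i => Real.rpow_pos_of_pos (ht0 i) _) ?_ ?_ hz)
    · exact Finset.sum_congr rfl fun i _ => (pow_alg (hr0 i) (ht0 i) hz).symm
    · exact fun i j hij => Real.rpow_le_rpow (hr0 j).le (hr hij) (by positivity)
    · exact fun i j hij => Real.rpow_le_rpow (ht0 i).le (ht hij) (by positivity)
  · positivity

lemma Q_attain {d : ℕ} {V : Matrix (Fin d) (Fin d) ℂ} (hV : V ∈ unitaryGroup (Fin d) ℂ)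
    {r t : Fin d → ℝ} (hr0 : ∀ i, 0 < r i) (ht0 : ∀ i, 0 < t i) {α z : ℝ} (hz : 0 < z) :
    Faz (cj V r) (cj V t) α z = FazC r t α := by
  unfold FazC Faz
  rw [mpow_cj hV, mpow_cj hV, cj_mul_s15 hV, cj_mul_s15 hV, mpow_cj hV, cj_trace hV]
  congr 1
  refine Finset.sum_congr rfl fun i _ => ?_
  rw [← pow_alg (hr0 i) (ht0 i) hz]
  congr 1
  ring

lemma unitary_row {d : ℕ} {M : Matrix (Fin d) (Fin d) ℂ} (hM : M ∈ unitaryGroup (Fin d) ℂ)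
    (j : Fin d) : ∑ k, Complex.normSq (M j k) = 1 := by
  have h := congrFun (congrFun (mem_unitaryGroup_iff.1 hM) j) j
  simp only [Matrix.mul_apply, star_apply, RCLike.star_def, Complex.mul_conj, one_apply_eq] at h
  exact_mod_cast h

lemma unitary_col {d : ℕ} {M : Matrix (Fin d) (Fin d) ℂ} (hM : M ∈ unitaryGroup (Fin d) ℂ)
    (k : Fin d) : ∑ j, Complex.normSq (M j k) = 1 := by
  have h := congrFun (congrFun (mem_unitaryGroup_iff'.1 hM) k) k
  simp only [Matrix.mul_apply, star_apply, RCLike.star_def, one_apply_eq, mul_comm,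
    Complex.mul_conj] at h
  exact_mod_cast h

lemma exists_ds {d k : ℕ} {W S : Matrix (Fin d) (Fin d) ℂ} (hW : W ∈ unitaryGroup (Fin d) ℂ)
    (hS : S ∈ unitaryGroup (Fin d) ℂ) {t s : Fin d → ℝ} {p : Fin k → ℝ}
    {U : Fin k → unitaryGroup (Fin d) ℂ} (hp : ∀ i, 0 ≤ p i) (hp1 : ∑ i, p i = 1)
    (h : cj W t = ∑ i, ((p i : ℝ) : ℂ) • ((U i : Matrix (Fin d) (Fin d) ℂ) * cj S s *
                star (U i : Matrix (Fin d) (Fin d) ℂ))) :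
    ∃ D ∈ doublyStochastic ℝ (Fin d), ∀ j, t j = ∑ l, D j l * s l := by
  have hM : ∀ i, star W * (U i : Matrix (Fin d) (Fin d) ℂ) * S ∈ unitaryGroup (Fin d) ℂ :=
    fun i => mul_mem (mul_mem (Unitary.star_mem hW) (U i).2) hS
  refine ⟨Matrix.of fun j l => ∑ i, p i *
    Complex.normSq ((star W * (U i : Matrix (Fin d) (Fin d) ℂ) * S) j l), ?_, ?_⟩
  · rw [mem_doublyStochastic_iff_sum]
    refine ⟨fun j l => by
        rw [of_apply]
        exact Finset.sum_nonneg fun i _ => mul_nonneg (hp i) (Complex.normSq_nonneg _),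
      fun j => ?_, fun l => ?_⟩
    · simp only [of_apply]
      rw [Finset.sum_comm]
      simp only [← Finset.mul_sum, unitary_row (hM _), mul_one, hp1]
    · simp only [of_apply]
      rw [Finset.sum_comm]
      simp only [← Finset.mul_sum, unitary_col (hM _), mul_one, hp1]
  · intro j
    have h1 : diagonal (fun i => ((t i : ℝ) : ℂ)) = ∑ i, ((p i : ℝ) : ℂ) •
        cj (star W * (U i : Matrix (Fin d) (Fin d) ℂ) * S) s := by
      have e := congrArg (fun X => star W * X * star (star W)) h
      simp only [cj_conj, mem_unitaryGroup_iff'.1 hW] at e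
      rw [Matrix.mul_sum, Matrix.sum_mul] at e
      simp only [Matrix.mul_smul, Matrix.smul_mul, cj_conj] at e
      simpa [cj, Matrix.mul_assoc] using e
    have h2 := congrFun (congrFun h1 j) j
    simp only [diagonal_apply_eq, Matrix.sum_apply, Matrix.smul_apply, cj_apply, smul_eq_mul,
      RCLike.star_def, mul_right_comm _ ((s _ : ℝ) : ℂ), Complex.mul_conj] at h2
    have h3 : t j = ∑ i, p i * ∑ l,
        Complex.normSq ((star W * (U i : Matrix (Fin d) (Fin d) ℂ) * S) j l) * s l := by
      exact_mod_cast h2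
    rw [h3]
    simp only [of_apply, Finset.sum_mul, Finset.mul_sum]
    rw [Finset.sum_comm]
    simp only [mul_assoc]

lemma ds_pos {d : ℕ} {D : Matrix (Fin d) (Fin d) ℝ} (hD : D ∈ doublyStochastic ℝ (Fin d))
    {t s : Fin d → ℝ} (hs : ∀ i, 0 < s i) (h : ∀ j, t j = ∑ l, D j l * s l) (j : Fin d) :
    0 < t j := by
  obtain ⟨h0, h1, -⟩ := mem_doublyStochastic_iff_sum.1 hD
  rw [h]
  refine Finset.sum_pos' (fun l _ => mul_nonneg (h0 j l) (hs l).le) ?_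
  by_contra hc
  push Not at hc
  have : ∑ l, D j l = 0 := Finset.sum_eq_zero fun l hl =>
    le_antisymm (not_lt.1 fun hl' => absurd (hc l hl) (not_le.2 (mul_pos hl' (hs l)))) (h0 j l)
  rw [h1] at this
  exact one_ne_zero this

lemma ds_sum {d : ℕ} {D : Matrix (Fin d) (Fin d) ℝ} (hD : D ∈ doublyStochastic ℝ (Fin d))
    {a b : Fin d → ℝ} (hab : Antivary a b) :
    ∑ j, a j * b j ≤ ∑ j, a j * ∑ l, D j l * b l := by
  obtain ⟨w, hw, hw1, rfl⟩ := exists_eq_sum_perm_of_mem_doublyStochastic hD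
  have e : ∑ j, a j * ∑ l, (∑ π, w π • Equiv.Perm.permMatrix ℝ π) j l * b l =
      ∑ π, w π * ∑ j, a j * b (π j) := by
    have e1 : ∀ j, ∑ l, (∑ π : Equiv.Perm (Fin d), w π • Equiv.Perm.permMatrix ℝ π) j l * b l
        = ∑ π, w π * b (π j) := by
      intro j
      simp only [Matrix.sum_apply, Finset.sum_mul]
      rw [Finset.sum_comm]
      refine Finset.sum_congr rfl fun π _ => ?_
      simp [Equiv.Perm.permMatrix, PEquiv.toMatrix_apply]
    simp only [e1, Finset.mul_sum]
    rw [Finset.sum_comm]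
    refine Finset.sum_congr rfl fun π _ => Finset.sum_congr rfl fun j _ => by ring
  rw [e]
  calc _ = ∑ π : Equiv.Perm (Fin d), w π * ∑ j, a j * b j := by
        rw [← Finset.sum_mul, hw1, one_mul]
    _ ≤ _ := Finset.sum_le_sum fun π _ =>
        mul_le_mul_of_nonneg_left hab.sum_mul_le_sum_mul_comp_perm (hw π)

lemma classical_le {d : ℕ} {D : Matrix (Fin d) (Fin d) ℝ} (hD : D ∈ doublyStochastic ℝ (Fin d))
    {r t s : Fin d → ℝ} (hr0 : ∀ i, 0 < r i) (hs0 : ∀ i, 0 < s i) (hr : Antitone r)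
    (hs : Monotone s) (h : ∀ j, t j = ∑ l, D j l * s l) {α : ℝ} (hα : α ∈ Set.Ioo (0 : ℝ) 1) :
    FazC r s α ≤ FazC r t α := by
  have h1 := sub_pos.2 hα.2
  have hα0 := hα.1
  obtain ⟨h0, hrow, -⟩ := mem_doublyStochastic_iff_sum.1 hD
  unfold FazC
  apply Real.rpow_le_rpow
  · exact Finset.sum_nonneg fun i _ =>
      mul_nonneg (Real.rpow_nonneg (hr0 i).le _) (Real.rpow_nonneg (hs0 i).le _)
  · have ha : Antitone fun i => r i ^ α := fun i j hij =>
      Real.rpow_le_rpow (hr0 j).le (hr hij) hα0.le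
    have hb : Monotone fun i => s i ^ (1 - α) := fun i j hij =>
      Real.rpow_le_rpow (hs0 i).le (hs hij) h1.le
    refine (ds_sum hD (ha.antivary hb)).trans (Finset.sum_le_sum fun j _ => ?_)
    refine mul_le_mul_of_nonneg_left ?_ (Real.rpow_nonneg (hr0 j).le _)
    rw [h]
    have := (Real.concaveOn_rpow h1.le (by linarith : 1 - α ≤ 1)).le_map_sum
      (t := Finset.univ) (w := D j) (p := s) (fun l _ => h0 j l) (hrow j) (fun l _ => (hs0 l).le)
    simpa using this
  · positivity

/-- for positive definite density matrices `ρ, σ`, `0 < α < 1` and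
`z ≥ max{α, 1−α}`, the minimum of `F_{α,z}(ρ, Σ_i p_i U_i σ U_i*)` over all mixed unitary
channels equals `F_α^C(λ↓(ρ), λ↑(σ))`, attained by a single unitary conjugation. -/
theorem stmt_15 {d : ℕ} (ρ σ : Matrix (Fin d) (Fin d) ℂ)
    (hρ : ρ.PosDef) (hσ : σ.PosDef) (hρ1 : ρ.trace = 1) (hσ1 : σ.trace = 1)
    (α z : ℝ) (hα : α ∈ Set.Ioo (0 : ℝ) 1) (hz : max α (1 - α) ≤ z) :
    IsLeast {x : ℝ | ∃ (k : ℕ) (p : Fin k → ℝ)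
        (U : Fin k → Matrix.unitaryGroup (Fin d) ℂ),
        (∀ i, 0 ≤ p i) ∧ ∑ i, p i = 1 ∧
        x = Faz ρ (∑ i, ((p i : ℝ) : ℂ) •
              ((U i : Matrix (Fin d) (Fin d) ℂ) * σ *
                star (U i : Matrix (Fin d) (Fin d) ℂ))) α z}
      (FazC (eigDown hρ.1) (eigUp hσ.1) α) ∧
    ∃ U ∈ Matrix.unitaryGroup (Fin d) ℂ,
      Faz ρ (U * σ * star U) α z = FazC (eigDown hρ.1) (eigUp hσ.1) α := by
  have hz0 : 0 < z := hα.1.trans_le ((le_max_left _ _).trans hz)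
  obtain ⟨V, hV, hVρ⟩ := exists_down hρ.1
  obtain ⟨S, hS, hSσ⟩ := exists_up hσ.1
  have hr0 : ∀ i, 0 < eigDown hρ.1 i := fun i => hρ.eigenvalues_pos _
  have hs0 : ∀ i, 0 < eigUp hσ.1 i := fun i => hσ.eigenvalues_pos _
  have hr := eigDown_anti hρ.1
  have hs := eigUp_mono hσ.1
  generalize eigDown hρ.1 = r at *
  generalize eigUp hσ.1 = s at *
  have hU : V * star S ∈ unitaryGroup (Fin d) ℂ := mul_mem hV (Unitary.star_mem hS)
  have hatt : Faz ρ ((V * star S) * σ * star (V * star S)) α z = FazC r s α := by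
    rw [hSσ, cj_conj, Matrix.mul_assoc, mem_unitaryGroup_iff'.1 hS, Matrix.mul_one, hVρ]
    exact Q_attain hV hr0 hs0 hz0
  refine ⟨⟨?_, ?_⟩, V * star S, hU, hatt⟩
  · refine ⟨1, fun _ => 1, fun _ => ⟨V * star S, hU⟩, fun _ => zero_le_one, by simp, ?_⟩
    rw [← hatt]
    simp
  · rintro x ⟨k, p, U, hp, hp1, rfl⟩
    set τ := ∑ i, ((p i : ℝ) : ℂ) • ((U i : Matrix (Fin d) (Fin d) ℂ) * σ *
                star (U i : Matrix (Fin d) (Fin d) ℂ)) with hτ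
    have hτh : τ.IsHermitian := by
      unfold Matrix.IsHermitian
      rw [hτ, hSσ, Matrix.conjTranspose_sum]
      refine Finset.sum_congr rfl fun i _ => ?_
      rw [cj_conj, Matrix.conjTranspose_smul, cj_herm]
      simp
    obtain ⟨W, hW, hWτ⟩ := exists_up hτh
    have ht := eigUp_mono hτh
    generalize eigUp hτh = t at *
    have h := hWτ
    rw [hτ, hSσ] at h
    obtain ⟨D, hD, hDt⟩ := exists_ds hW hS hp hp1 h.symm
    have ht0 := ds_pos hD hs0 hDt
    refine (classical_le hD hr0 hs0 hr hs hDt hα).trans ?_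
    rw [hWτ, hVρ]
    exact Q_lower hV hW hr0 ht0 hr ht hα hz0
end
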